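/- Let E ⊆ ℝ² be compact and ε > 0, and let C(∂E_ε) denote the set of chain singularities on ∂E_ε, i.e. the singularities of types S6, S7 and S8. Then C(∂E_ε) is a closed and totally disconnected subset of ℝ². -/

import Mathlib

open Metric Set Filter Topology RealInnerProductSpace

noncomputable section

/-- The Euclidean plane. -/
abbrev Plane := EuclideanSpace ℝ (Fin 2)

/-- The closed ε-neighbourhood of a set `E ⊆ ℝ²`: the closure of the union of open
ε-balls centred at points of `E`. -/
def eNbhd (E : Set Plane) (ε : ℝ) : Set Plane :=
  closure (⋃ y ∈ E, ball y ε)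

/-- The set of contributors of a boundary point `x ∈ ∂E_ε`: points `y ∈ ∂E` with
`‖y - x‖ = ε`. -/
def contributors (E : Set Plane) (ε : ℝ) (x : Plane) : Set Plane :=
  {y ∈ frontier E | ‖y - x‖ = ε}

/-- The set of outward directions from `E_ε` at `x`. -/
def outwardDirs (E : Set Plane) (ε : ℝ) (x : Plane) : Set Plane :=
  {ξ | ‖ξ‖ = 1 ∧ ∃ u : ℕ → Plane, (∀ n, u n ∉ eNbhd E ε) ∧
    Tendsto u atTop (nhds x) ∧
    Tendsto (fun n => (‖u n - x‖)⁻¹ • (u n - x)) atTop (nhds ξ)}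

/-- The set of extremal outward directions at `x`: outward directions perpendicular to
`y - x` for some contributor `y`. -/
def extOutward (E : Set Plane) (ε : ℝ) (x : Plane) : Set Plane :=
  {ξ ∈ outwardDirs E ε x | ∃ y ∈ contributors E ε x, ⟪y - x, ξ⟫ = 0}

/-- The set of extremal contributors at `x`: contributors perpendicular to some
outward direction. -/
def extContrib (E : Set Plane) (ε : ℝ) (x : Plane) : Set Plane :=
  {y ∈ contributors E ε x | ∃ ξ ∈ outwardDirs E ε x, ⟪y - x, ξ⟫ = 0}

/-- The set of extremal pairs at `x`. -/
def extPairs (E : Set Plane) (ε : ℝ) (x : Plane) : Set (Plane × Plane) :=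
  {p | p.1 ∈ outwardDirs E ε x ∧ p.2 ∈ contributors E ε x ∧ ⟪p.2 - x, p.1⟫ = 0}

/-- The set `Unp(E)` of boundary points of `E_ε` with a unique contributor. -/
def unp (E : Set Plane) (ε : ℝ) : Set Plane :=
  {x ∈ frontier (eNbhd E ε) | ∃ y, contributors E ε x = {y}}

/-- A boundary point `x ∈ ∂E_ε` is smooth if `x ∈ Unp(E)` and a whole neighbourhood of
`x` on the boundary consists of points of `Unp(E)`. -/
def IsSmoothPt (E : Set Plane) (ε : ℝ) (x : Plane) : Prop :=
  x ∈ unp E ε ∧ ∃ r > 0, frontier (eNbhd E ε) ∩ ball x r ⊆ unp E ε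

/-- A singularity: a non-smooth boundary point of `E_ε`. -/
def IsSingularity (E : Set Plane) (ε : ℝ) (x : Plane) : Prop :=
  x ∈ frontier (eNbhd E ε) ∧ ¬ IsSmoothPt E ε x

/-- The open half-ball of radius `r` at `x` in direction `v`. -/
def halfBall (x v : Plane) (r : ℝ) : Set Plane :=
  {z ∈ ball x r | 0 < ⟪z - x, v⟫}

/-- `V` is a connected component of the complement of `E_ε`. -/
def IsCompOfCompl (E : Set Plane) (ε : ℝ) (V : Set Plane) : Prop :=
  ∃ z, z ∉ eNbhd E ε ∧ V = connectedComponentIn (eNbhd E ε)ᶜ z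

/-- The closed geodesic arc-segment between `v, w ∈ S¹`. -/
def arcSeg (v w : Plane) : Set Plane :=
  {u | ‖u‖ = 1 ∧ ∃ a b : ℝ, 0 ≤ a ∧ 0 ≤ b ∧ u = a • v + b • w}

/-- The open geodesic arc-segment between `v, w ∈ S¹`. -/
def openArc (v w : Plane) : Set Plane :=
  arcSeg v w \ {v, w}

/-- A chain sequence for `x`: a sequence of singularities converging to `x` whose
extremal contributors become increasingly opposed. -/
def IsChainSeq (E : Set Plane) (ε : ℝ) (x : Plane) (u : ℕ → Plane) : Prop :=
  (∀ n, IsSingularity E ε (u n)) ∧ (∀ n, u n ≠ x) ∧ Tendsto u atTop (nhds x) ∧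
  ∃ y1 y2 : ℕ → Plane, (∀ n, extContrib E ε (u n) = {y1 n, y2 n}) ∧
    Tendsto (fun n => ⟪ε⁻¹ • (y1 n - u n), ε⁻¹ • (y2 n - u n)⟫) atTop (nhds (-1))

/-- Type S1: wedge. -/
def IsWedge (E : Set Plane) (ε : ℝ) (x : Plane) : Prop :=
  IsSingularity E ε x ∧
  ∃ ξ₁ ξ₂, extOutward E ε x = {ξ₁, ξ₂} ∧ ξ₁ ≠ ξ₂ ∧ ξ₁ ≠ -ξ₂

/-- Type S2: one-sided sharp singularity. -/
def IsSharp (E : Set Plane) (ε : ℝ) (x : Plane) : Prop :=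
  IsSingularity E ε x ∧ (∃ ξ, extOutward E ε x = {ξ}) ∧
  ∃ δ > 0, IsConnected (ball x δ ∩ (eNbhd E ε)ᶜ)

/-- Type S3: sharp-sharp singularity. -/
def IsSharpSharp (E : Set Plane) (ε : ℝ) (x : Plane) : Prop :=
  IsSingularity E ε x ∧ ∃ ξ, extOutward E ε x = {ξ, -ξ} ∧
    ∀ η ∈ ({ξ, -ξ} : Set Plane), ∃ δ > 0, IsConnected (halfBall x η δ ∩ (eNbhd E ε)ᶜ)

/-- Type S4: one-sided shallow singularity. -/
def IsShallow (E : Set Plane) (ε : ℝ) (x : Plane) : Prop :=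
  IsSingularity E ε x ∧ x ∈ unp E ε ∧
  ∃ ξ₁ ξ₂, extOutward E ε x = {ξ₁, ξ₂} ∧
    (∃ δ > 0, halfBall x ξ₁ δ ∩ frontier (eNbhd E ε) ⊆ unp E ε) ∧
    (∀ δ > 0, ¬ (halfBall x ξ₂ δ ∩ frontier (eNbhd E ε) ⊆ unp E ε))

/-- Type S5: shallow-shallow singularity. -/
def IsShallowShallow (E : Set Plane) (ε : ℝ) (x : Plane) : Prop :=
  IsSingularity E ε x ∧ x ∈ unp E ε ∧
  ∃ ξ₁ ξ₂, extOutward E ε x = {ξ₁, ξ₂} ∧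
    ∀ η ∈ ({ξ₁, ξ₂} : Set Plane), ∀ δ > 0,
      ¬ (halfBall x η δ ∩ frontier (eNbhd E ε) ⊆ unp E ε)

/-- Type S6: one-sided chain singularity. -/
def IsChainSing (E : Set Plane) (ε : ℝ) (x : Plane) : Prop :=
  IsSingularity E ε x ∧ (∃ ξ, extOutward E ε x = {ξ}) ∧
  ∃ u, IsChainSeq E ε x u

/-- Type S7: chain-chain singularity. -/
def IsChainChain (E : Set Plane) (ε : ℝ) (x : Plane) : Prop :=
  IsSingularity E ε x ∧ ∃ ξ, extOutward E ε x = {ξ, -ξ} ∧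
    ∀ η ∈ ({ξ, -ξ} : Set Plane), ∃ δ > 0, ∃ u,
      IsChainSeq E ε x u ∧ ∀ n, u n ∈ halfBall x η δ

/-- Type S8: sharp-chain singularity. -/
def IsSharpChain (E : Set Plane) (ε : ℝ) (x : Plane) : Prop :=
  IsSingularity E ε x ∧ ∃ ξ, extOutward E ε x = {ξ, -ξ} ∧
    (∃ δ > 0, IsConnected (halfBall x ξ δ ∩ (eNbhd E ε)ᶜ)) ∧
    (∃ δ > 0, ∃ u, IsChainSeq E ε x u ∧ ∀ n, u n ∈ halfBall x (-ξ) δ)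

/-!
Along a chain sequence the directions from `u n` to its two extremal contributors become opposite,
so in the limit `x` has the antipodal contributors `x ± ε p` for some unit vector `p`. Conversely,
antipodal points accumulating at `x` form a chain sequence for `x`. Hence the set of points that
admit a chain sequence is closed.

The complement of `E_ε` avoids the disks of radius `ε` about `x ± ε p`; this cone bound squeezes
it, near `x`, onto the line through `x` perpendicular to `p`. Let `S` be a preconnected set of
antipodal points and `x ∈ S`. Since `p` depends continuously, up to sign, on the point, a line
parallel to `p` through a nearby point `q ∉ E_ε` misses `S`: at an intersection `s` the vector
`q - s` would violate the cone bound. Such lines exist on both sides of `x`, arbitrarily close to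
it, so they cut `x` off from the rest of `S`.

Finally, a point `x` with a chain sequence is of type S6, S7 or S8. If both `ξ` and `-ξ` are outward
directions, then `x ± ε p` are the only contributors, and the distance to any point of `E` near one
of them is monotone along small arcs centred at `x`. Each such arc therefore meets the complement
of `E_ε` in an interval. Either these intervals are nonempty for all small radii, and the complement
is connected in a half-ball, or they vanish at a radius that is a limit of radii where they do not;
this produces boundary points near `x` with contributors near both `x + ε p` and `x - ε p`, hence a
chain sequence on that side.
-/

namespace ChainSingularities

open Real
-- for the instance `Fact (Module.finrank ℝ Plane = 2)`
open scoped EuclideanSpace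

section Connectedness

variable {X Y : Type*} [TopologicalSpace X] [TopologicalSpace Y]

lemma isPreconnected_of_isOpen_of_sections {s : Set (X × Y)} (hs : IsOpen s)
    (hbase : IsPreconnected (Prod.fst '' s))
    (hsec : ∀ x, IsPreconnected (Prod.mk x ⁻¹' s)) : IsPreconnected s := by
  intro u v hu hv hsuv hsu hsv
  obtain ⟨_, -, ⟨⟨_, y⟩, hy, rfl⟩, ⟨x, y'⟩, hy', rfl⟩ := hbase _ _
    (isOpenMap_fst _ (hs.inter hu)) (isOpenMap_fst _ (hs.inter hv))
    (by rw [← image_union, ← inter_union_distrib_left]; exact image_mono (subset_inter le_rfl hsuv))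
    (by rw [inter_eq_right.2 (image_mono inter_subset_left)]; exact hsu.image _)
    (by rw [inter_eq_right.2 (image_mono inter_subset_left)]; exact hsv.image _)
  obtain ⟨y'', hy''⟩ := hsec x (Prod.mk x ⁻¹' u) (Prod.mk x ⁻¹' v)
    (hu.preimage (by fun_prop)) (hv.preimage (by fun_prop)) (fun _ h ↦ hsuv h) ⟨y, hy⟩ ⟨y', hy'⟩
  exact ⟨(x, y''), hy''⟩

end Connectedness

section Frames

variable {F : Type*} [NormedAddCommGroup F] [InnerProductSpace ℝ F]

lemma two_mul_abs_inner_le_norm_sq {v p : F} {r : ℝ} (hp : ‖p‖ = 1) (hr : 0 ≤ r)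
    (h₁ : r ≤ ‖v - r • p‖) (h₂ : r ≤ ‖v + r • p‖) : 2 * r * |⟪v, p⟫| ≤ ‖v‖ ^ 2 := by
  have hsub : ‖v - r • p‖ ^ 2 = ‖v‖ ^ 2 - 2 * r * ⟪v, p⟫ + r ^ 2 := by
    rw [norm_sub_sq_real, norm_smul, real_inner_smul_right, hp, mul_one, Real.norm_eq_abs, sq_abs]
    ring
  have hadd : ‖v + r • p‖ ^ 2 = ‖v‖ ^ 2 + 2 * r * ⟪v, p⟫ + r ^ 2 := by
    rw [norm_add_sq_real, norm_smul, real_inner_smul_right, hp, mul_one, Real.norm_eq_abs, sq_abs]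
    ring
  have := pow_le_pow_left₀ hr h₁ 2
  have := pow_le_pow_left₀ hr h₂ 2
  cases abs_cases ⟪v, p⟫ <;> nlinarith

/-- An orthonormal pair `(e, f)`: the coordinate axes in which the plane is read near a point. -/
structure IsFrame (e f : F) : Prop where
  norm_left : ‖e‖ = 1
  norm_right : ‖f‖ = 1
  inner_eq_zero : ⟪e, f⟫ = 0

/-- The unit vector at angle `θ` from `e` towards `f`. -/
def polar (e f : F) (θ : ℝ) : F := cos θ • e + sin θ • f

lemma polar_neg_right (e f : F) (θ : ℝ) : polar e (-f) θ = polar e f (-θ) := by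
  simp [polar]

@[fun_prop]
lemma continuous_polar (e f : F) : Continuous (polar e f) := by
  unfold polar; fun_prop

namespace IsFrame

variable {e f : F}

lemma symm (h : IsFrame e f) : IsFrame f e :=
  ⟨h.norm_right, h.norm_left, by rw [real_inner_comm, h.inner_eq_zero]⟩

lemma neg_right (h : IsFrame e f) : IsFrame e (-f) :=
  ⟨h.norm_left, by rw [norm_neg, h.norm_right], by rw [inner_neg_right, h.inner_eq_zero, neg_zero]⟩

lemma neg_left (h : IsFrame e f) : IsFrame (-e) f := h.symm.neg_right.symm

lemma inner_polar_polar (h : IsFrame e f) (θ θ' : ℝ) :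
    ⟪polar e f θ, polar e f θ'⟫ = cos (θ - θ') := by
  have he : ⟪e, e⟫ = 1 := by rw [real_inner_self_eq_norm_sq, h.norm_left, one_pow]
  have hf : ⟪f, f⟫ = 1 := by rw [real_inner_self_eq_norm_sq, h.norm_right, one_pow]
  simp only [polar, inner_add_left, inner_add_right, real_inner_smul_left, real_inner_smul_right,
    h.inner_eq_zero, h.symm.inner_eq_zero, he, hf, cos_sub]
  ring

lemma norm_polar (h : IsFrame e f) (θ : ℝ) : ‖polar e f θ‖ = 1 := by
  have := h.inner_polar_polar θ θ
  rwa [real_inner_self_eq_norm_sq, sub_self, cos_zero,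
    pow_eq_one_iff_of_nonneg (norm_nonneg _) two_ne_zero] at this

lemma dist_add_smul_polar (h : IsFrame e f) {x : F} {ρ θ : ℝ} (hρ : 0 ≤ ρ) :
    dist (x + ρ • polar e f θ) x = ρ := by
  rw [dist_self_add_left, norm_smul, h.norm_polar, mul_one, Real.norm_of_nonneg hρ]

lemma polar_polar (h : IsFrame e f) (θ : ℝ) :
    IsFrame (polar e f θ) (polar e f (θ + π / 2)) :=
  ⟨h.norm_polar _, h.norm_polar _, by
    rw [h.inner_polar_polar, sub_add_cancel_left, cos_neg, cos_pi_div_two]⟩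

lemma inner_polar_left (h : IsFrame e f) (θ : ℝ) : ⟪polar e f θ, e⟫ = cos θ := by
  simpa [polar] using h.inner_polar_polar θ 0

lemma inner_polar_right (h : IsFrame e f) (θ : ℝ) : ⟪polar e f θ, f⟫ = sin θ := by
  simpa [polar, cos_sub] using h.inner_polar_polar θ (π / 2)

end IsFrame

lemma polar_sub_polar (e f : F) (θ θ' : ℝ) :
    polar e f θ' - polar e f θ =
      (2 * sin ((θ' - θ) / 2)) • polar e f ((θ' + θ) / 2 + π / 2) := by
  have hc : cos θ' - cos θ =
      2 * sin ((θ' - θ) / 2) * cos ((θ' + θ) / 2 + π / 2) := by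
    rw [cos_sub_cos, cos_add_pi_div_two]; ring
  have hs : sin θ' - sin θ =
      2 * sin ((θ' - θ) / 2) * sin ((θ' + θ) / 2 + π / 2) := by
    rw [sin_sub_sin, sin_add_pi_div_two]
  simp only [polar, smul_add, smul_smul, ← hc, ← hs, sub_smul]
  abel

namespace IsFrame

variable {e f : F}

lemma strictMonoOn_inner_polar (h : IsFrame e f) {w : F} {r : ℝ} (hw : ‖w - r • f‖ < r / 2) :
    StrictMonoOn (fun θ ↦ ⟪polar e f θ, w⟫) (Icc (-(π / 3)) (π / 3)) := by
  intro θ hθ θ' hθ' hlt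
  have hsin : 0 < sin ((θ' - θ) / 2) :=
    sin_pos_of_pos_of_lt_pi (by linarith) (by linarith [hθ.1, hθ'.2, pi_pos])
  obtain ⟨m, hm⟩ : ∃ m, m = (θ' + θ) / 2 := ⟨_, rfl⟩
  have hcos : 1 / 2 ≤ cos m := by
    rw [← cos_pi_div_three, ← cos_abs m]
    exact cos_le_cos_of_nonneg_of_le_pi (abs_nonneg _) (by linarith [pi_pos])
      (abs_le.2 ⟨by linarith [hθ.1, hθ'.1], by linarith [hθ.2, hθ'.2]⟩)
  have herr := neg_le_of_abs_le (abs_real_inner_le_norm (polar e f (m + π / 2)) (w - r • f))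
  rw [h.norm_polar, one_mul, inner_sub_right, real_inner_smul_right, h.inner_polar_right,
    sin_add_pi_div_two] at herr
  have hw_pos : 0 < ⟪polar e f (m + π / 2), w⟫ := by
    nlinarith [norm_nonneg (w - r • f)]
  have hdiff : ⟪polar e f θ', w⟫ - ⟪polar e f θ, w⟫ =
      2 * sin ((θ' - θ) / 2) * ⟪polar e f (m + π / 2), w⟫ := by
    rw [← inner_sub_left, polar_sub_polar, real_inner_smul_left, hm]
  have : 0 < ⟪polar e f θ', w⟫ - ⟪polar e f θ, w⟫ := hdiff ▸ by positivity
  exact sub_pos.1 this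

lemma strictAntiOn_dist_polar (h : IsFrame e f) {x y : F} {r ρ : ℝ}
    (hy : dist y (x + r • f) < r / 2) (hρ : 0 < ρ) :
    StrictAntiOn (fun θ ↦ dist (x + ρ • polar e f θ) y) (Icc (-(π / 3)) (π / 3)) := by
  intro θ hθ θ' hθ' hlt
  have hw : ‖(y - x) - r • f‖ < r / 2 := by rwa [sub_sub, ← dist_eq_norm]
  have hmono := h.strictMonoOn_inner_polar hw hθ hθ' hlt
  have hdist : ∀ φ, dist (x + ρ • polar e f φ) y ^ 2 =
      ρ ^ 2 - 2 * ρ * ⟪polar e f φ, y - x⟫ + ‖y - x‖ ^ 2 := by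
    intro φ
    rw [dist_eq_norm, show x + ρ • polar e f φ - y = ρ • polar e f φ - (y - x) by abel,
      norm_sub_sq_real, norm_smul, h.norm_polar, real_inner_smul_left, Real.norm_eq_abs, mul_one,
      sq_abs]
    ring
  refine lt_of_pow_lt_pow_left₀ 2 dist_nonneg ?_
  simp only [hdist]
  have := mul_lt_mul_of_pos_left hmono hρ
  linarith

lemma strictMonoOn_dist_polar (h : IsFrame e f) {x y : F} {r ρ : ℝ}
    (hy : dist y (x - r • f) < r / 2) (hρ : 0 < ρ) :
    StrictMonoOn (fun θ ↦ dist (x + ρ • polar e f θ) y) (Icc (-(π / 3)) (π / 3)) := by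
  intro θ hθ θ' hθ' hlt
  have hanti := h.neg_right.strictAntiOn_dist_polar (x := x) (y := y) (r := r)
    (by rwa [smul_neg, ← sub_eq_add_neg]) hρ
  simpa [polar_neg_right] using hanti (neg_mem_Icc_iff.2 (by simpa using hθ'))
    (neg_mem_Icc_iff.2 (by simpa using hθ)) (neg_lt_neg hlt)

variable [Fact (Module.finrank ℝ F = 2)]

lemma norm_sq_eq (h : IsFrame e f) (v : F) : ‖v‖ ^ 2 = ⟪v, e⟫ ^ 2 + ⟪v, f⟫ ^ 2 := by
  have hon : Orthonormal ℝ ![e, f] := by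
    simp [orthonormal_vecCons_iff, h.norm_left, h.norm_right, h.inner_eq_zero]
  have hspan : ⊤ ≤ Submodule.span ℝ (Set.range ![e, f]) :=
    (hon.linearIndependent.span_eq_top_of_card_eq_finrank
      (by rw [Fintype.card_fin, Fact.out (p := Module.finrank ℝ F = 2)])).ge
  have := (OrthonormalBasis.mk hon hspan).sum_sq_norm_inner_left v
  simpa using this.symm

lemma ext (h : IsFrame e f) {v w : F} (he : ⟪v, e⟫ = ⟪w, e⟫) (hf : ⟪v, f⟫ = ⟪w, f⟫) : v = w := by
  have := h.norm_sq_eq (v - w)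
  rw [inner_sub_left, inner_sub_left, he, hf, sub_self, sub_self] at this
  exact sub_eq_zero.1 (norm_eq_zero.1 (by simpa using this))

lemma eq_or_eq_neg (h : IsFrame e f) {v : F} (hv : ‖v‖ = 1) (hve : ⟪v, e⟫ = 0) :
    v = f ∨ v = -f := by
  have hvf : ⟪v, f⟫ = 1 ∨ ⟪v, f⟫ = -1 := by
    simpa [hv, hve, eq_comm] using h.norm_sq_eq v
  refine hvf.imp (fun hvf ↦ h.ext ?_ ?_) (fun hvf ↦ h.ext ?_ ?_) <;>
    simp [hve, hvf, h.norm_right, h.symm.inner_eq_zero]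

lemma exists_eq_polar (h : IsFrame e f) {v : F} (hv : ‖v‖ = 1) (hve : 0 ≤ ⟪v, e⟫) :
    ∃ θ ∈ Icc (-(π / 2)) (π / 2), v = polar e f θ := by
  have hsq := h.norm_sq_eq v
  have habs : |⟪v, f⟫| ≤ 1 := by
    simpa [hv, h.norm_right] using abs_real_inner_le_norm v f
  refine ⟨arcsin ⟪v, f⟫, arcsin_mem_Icc _, h.ext ?_ ?_⟩
  · rw [h.inner_polar_left, cos_arcsin, ← Real.sqrt_sq hve]
    congr 1
    rw [hv] at hsq; linarith
  · rw [h.inner_polar_right, sin_arcsin (abs_le.1 habs).1 (abs_le.1 habs).2]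

end IsFrame

lemma exists_isFrame [Fact (Module.finrank ℝ F = 2)] {e : F} (he : ‖e‖ = 1) : ∃ f, IsFrame e f := by
  have := FiniteDimensional.of_fact_finrank_eq_two (K := ℝ) (V := F)
  let o : Orientation ℝ F (Fin 2) := (Module.finBasisOfFinrankEq ℝ F Fact.out).orientation
  refine ⟨o.rightAngleRotation e, he, ?_, by simp⟩
  rw [LinearIsometryEquiv.norm_map, he]

end Frames

section Neighbourhood

variable {E : Set Plane} {ε : ℝ} {x y z : Plane}

lemma isClosed_eNbhd : IsClosed (eNbhd E ε) := isClosed_closure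

lemma mem_frontier_eNbhd_iff :
    x ∈ frontier (eNbhd E ε) ↔ x ∈ eNbhd E ε ∧ x ∈ closure (eNbhd E ε)ᶜ := by
  rw [frontier_eq_closure_inter_closure, isClosed_eNbhd.closure_eq, mem_inter_iff]

lemma mem_eNbhd_iff (hε : 0 < ε) : z ∈ eNbhd E ε ↔ ∃ y ∈ closure E, dist z y ≤ ε := by
  rw [eNbhd, ← thickening_eq_biUnion_ball, closure_thickening hε,
    cthickening_eq_biUnion_closedBall E hε.le]
  simp only [mem_iUnion, mem_closedBall, exists_prop]

lemma lt_dist_of_notMem_eNbhd (hε : 0 < ε) (hz : z ∉ eNbhd E ε) (hy : y ∈ closure E) :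
    ε < dist z y :=
  lt_of_not_ge fun h ↦ hz ((mem_eNbhd_iff hε).2 ⟨y, hy, h⟩)

lemma le_dist_of_mem_closure_compl (hε : 0 < ε) (hz : z ∈ closure (eNbhd E ε)ᶜ)
    (hy : y ∈ closure E) : ε ≤ dist z y :=
  closure_minimal (t := {w | ε ≤ dist w y}) (fun _ hw ↦ (lt_dist_of_notMem_eNbhd hε hw hy).le)
    (isClosed_le continuous_const (by fun_prop)) hz

lemma le_dist_of_mem_frontier (hε : 0 < ε) (hx : x ∈ frontier (eNbhd E ε))
    (hy : y ∈ closure E) : ε ≤ dist x y :=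
  le_dist_of_mem_closure_compl hε (mem_frontier_eNbhd_iff.1 hx).2 hy

-- An interior point of `E` can be moved towards `x`, so it is never a nearest point.
lemma mem_contributors_iff (hε : 0 < ε) (hx : x ∈ frontier (eNbhd E ε)) :
    y ∈ contributors E ε x ↔ y ∈ closure E ∧ dist x y = ε := by
  rw [contributors, mem_ofPred_eq, ← dist_eq_norm, dist_comm]
  refine and_congr_left fun hxy ↦
    ⟨fun hy ↦ frontier_subset_closure hy, fun hy ↦ ⟨hy, fun hint ↦ ?_⟩⟩
  have hcont : ContinuousAt (fun t : ℝ ↦ AffineMap.lineMap y x t) 0 := by fun_prop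
  have hev : ∀ᶠ t in 𝓝[>] (0 : ℝ), AffineMap.lineMap y x t ∈ interior E :=
    (hcont.eventually_mem (by simpa using isOpen_interior.mem_nhds hint)).filter_mono
      nhdsWithin_le_nhds
  obtain ⟨t, ht, ht0, ht1⟩ := (hev.and (Ioo_mem_nhdsGT one_pos)).exists
  have hle := le_dist_of_mem_frontier hε hx (subset_closure (interior_subset ht))
  rw [dist_comm, dist_lineMap_right, dist_comm, hxy, Real.norm_eq_abs,
    abs_of_pos (sub_pos.2 ht1)] at hle
  nlinarith

lemma norm_inv_smul_sub (hε : 0 < ε) (hy : y ∈ contributors E ε x) : ‖ε⁻¹ • (y - x)‖ = 1 := by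
  rw [norm_smul, hy.2, norm_inv, Real.norm_of_nonneg hε.le, inv_mul_cancel₀ hε.ne']

lemma contributors_nonempty (hε : 0 < ε) (hx : x ∈ frontier (eNbhd E ε)) :
    (contributors E ε x).Nonempty := by
  obtain ⟨y, hy, hxy⟩ := (mem_eNbhd_iff hε).1 (mem_frontier_eNbhd_iff.1 hx).1
  exact ⟨y, (mem_contributors_iff hε hx).2 ⟨hy, hxy.antisymm (le_dist_of_mem_frontier hε hx hy)⟩⟩

lemma eventually_forall_mem_of_contributors_subset (hε : 0 < ε) (hx : x ∈ frontier (eNbhd E ε))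
    {U : Set Plane} (hU : IsOpen U) (hsub : contributors E ε x ⊆ U) :
    ∀ᶠ z in 𝓝 x, ∀ y ∈ closure E, dist z y ≤ ε → y ∈ U := by
  have hK : IsCompact (closure E ∩ closedBall x (ε + 1)) :=
    (isCompact_closedBall x _).inter_left isClosed_closure
  have hcpt : ∀ᶠ z in 𝓝 x, ∀ y ∈ closure E ∩ closedBall x (ε + 1), dist z y ≤ ε → y ∈ U := by
    refine hK.eventually_forall_of_forall_eventually fun y hy ↦ ?_
    by_cases hyU : y ∈ U
    · exact (continuousAt_snd.eventually_mem (hU.mem_nhds hyU)).mono fun _ h _ ↦ h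
    · have hlt : ε < dist x y := (le_dist_of_mem_frontier hε hx hy.1).lt_of_ne fun h ↦
        hyU (hsub ((mem_contributors_iff hε hx).2 ⟨hy.1, h.symm⟩))
      have hcont : ContinuousAt (fun w : Plane × Plane ↦ dist w.1 w.2) (x, y) := by fun_prop
      exact (hcont.eventually_const_lt hlt).mono fun _ h h' ↦ absurd h' h.not_ge
  filter_upwards [hcpt, ball_mem_nhds x one_pos] with z hz hzx y hy hzy
  refine hz y ⟨hy, ?_⟩ hzy
  rw [mem_closedBall]
  linarith [dist_triangle y z x, dist_comm y z, mem_ball.1 hzx]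

end Neighbourhood

section OutwardDirections

variable {E : Set Plane} {ε : ℝ} {x y ξ v : Plane}

lemma mem_outwardDirs_iff : ξ ∈ outwardDirs E ε x ↔ ‖ξ‖ = 1 ∧
    (x, ξ) ∈ closure ((fun z ↦ (z, ‖z - x‖⁻¹ • (z - x))) '' (eNbhd E ε)ᶜ) := by
  rw [outwardDirs, mem_ofPred_eq, mem_closure_iff_seq_limit]
  refine and_congr_right fun _ ↦ ⟨?_, ?_⟩
  · rintro ⟨u, hu, hux, huξ⟩
    exact ⟨_, fun n ↦ mem_image_of_mem _ (hu n), hux.prodMk_nhds huξ⟩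
  · rintro ⟨w, hw, hlim⟩
    choose u hu huw using hw
    obtain rfl : (fun n ↦ (u n, ‖u n - x‖⁻¹ • (u n - x))) = w := funext huw
    exact ⟨u, hu, hlim.fst_nhds, hlim.snd_nhds⟩

lemma isClosed_outwardDirs : IsClosed (outwardDirs E ε x) := by
  have heq : outwardDirs E ε x = {ξ | ‖ξ‖ = 1} ∩
      Prod.mk x ⁻¹' closure ((fun z ↦ (z, ‖z - x‖⁻¹ • (z - x))) '' (eNbhd E ε)ᶜ) :=
    Set.ext fun _ ↦ mem_outwardDirs_iff
  rw [heq]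
  exact (isClosed_eq continuous_norm continuous_const).inter
    (isClosed_closure.preimage (by fun_prop))

lemma inner_nonpos_of_mem_outwardDirs (hε : 0 < ε) (hx : x ∈ frontier (eNbhd E ε))
    (hξ : ξ ∈ outwardDirs E ε x) (hy : y ∈ contributors E ε x) : ⟪y - x, ξ⟫ ≤ 0 := by
  obtain ⟨hyE, hxy⟩ := (mem_contributors_iff hε hx).1 hy
  have hclosed : IsClosed {w : Plane × Plane | ⟪y - x, w.2⟫ ≤ ‖w.1 - x‖ / 2} :=
    isClosed_le (by fun_prop) (by fun_prop)
  have hmem := closure_minimal ?_ hclosed (mem_outwardDirs_iff.1 hξ).2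
  · simpa using hmem
  rintro _ ⟨z, hz, rfl⟩
  have hzx : 0 < ‖z - x‖ := norm_pos_iff.2 (sub_ne_zero.2
    fun h ↦ hz (h ▸ (mem_frontier_eNbhd_iff.1 hx).1))
  have hlt : ε ^ 2 < dist z y ^ 2 :=
    pow_lt_pow_left₀ (lt_dist_of_notMem_eNbhd hε hz hyE) hε.le two_ne_zero
  rw [dist_eq_norm, ← sub_sub_sub_cancel_right z y x, norm_sub_sq_real, ← dist_eq_norm y x,
    dist_comm y x, hxy, real_inner_comm] at hlt
  rw [mem_ofPred_eq, real_inner_smul_right, inv_mul_le_iff₀ hzx]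
  linarith

lemma outwardDirs_nonempty (hx : x ∈ frontier (eNbhd E ε)) : (outwardDirs E ε x).Nonempty := by
  obtain ⟨hxE, hxc⟩ := mem_frontier_eNbhd_iff.1 hx
  obtain ⟨u, hu, hux⟩ := mem_closure_iff_seq_limit.1 hxc
  have hsphere : ∀ n, ‖u n - x‖⁻¹ • (u n - x) ∈ sphere (0 : Plane) 1 := fun n ↦ by
    have hne : u n - x ≠ 0 := sub_ne_zero.2 fun h ↦ hu n (by rwa [h])
    simp [norm_smul, norm_ne_zero_iff.2 hne]
  obtain ⟨ξ, hξ, φ, hφ, hlim⟩ := (isCompact_sphere (0 : Plane) 1).tendsto_subseq hsphere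
  exact ⟨ξ, by simpa using hξ, u ∘ φ, fun n ↦ hu _, hux.comp hφ.tendsto_atTop, hlim⟩

lemma mem_outwardDirs_of_inner_neg (hε : 0 < ε) (hx : x ∈ frontier (eNbhd E ε)) (hv : ‖v‖ = 1)
    (hneg : ∀ y ∈ contributors E ε x, ⟪y - x, v⟫ < 0) : v ∈ outwardDirs E ε x := by
  have hU : IsOpen {y | ⟪y - x, v⟫ < 0} := isOpen_lt (by fun_prop) continuous_const
  have hray : Tendsto (fun t : ℝ ↦ x + t • v) (𝓝[>] 0) (𝓝 x) := by
    have : ContinuousAt (fun t : ℝ ↦ x + t • v) 0 := by fun_prop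
    simpa [ContinuousAt] using this.mono_left nhdsWithin_le_nhds
  refine mem_outwardDirs_iff.2 ⟨hv, mem_closure_of_tendsto (hray.prodMk_nhds tendsto_const_nhds) ?_⟩
  filter_upwards [hray.eventually (eventually_forall_mem_of_contributors_subset hε hx hU hneg),
    self_mem_nhdsWithin] with t ht htpos
  rw [mem_Ioi] at htpos
  refine ⟨x + t • v, fun hmem ↦ ?_, by simp [norm_smul, hv, abs_of_pos htpos, htpos.ne']⟩
  obtain ⟨y, hy, hty⟩ := (mem_eNbhd_iff hε).1 hmem
  have hinner : ⟪y - x, v⟫ < 0 := ht y hy hty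
  have hle := (pow_le_pow_left₀ dist_nonneg hty 2).trans
    (pow_le_pow_left₀ hε.le (le_dist_of_mem_frontier hε hx hy) 2)
  rw [dist_eq_norm, show x + t • v - y = t • v - (y - x) by abel, norm_sub_sq_real, norm_smul, hv,
    real_inner_smul_left, real_inner_comm, dist_comm, dist_eq_norm, Real.norm_eq_abs, mul_one,
    sq_abs] at hle
  nlinarith

end OutwardDirections

section ExtremalContributors

/-- The angles, measured from `e` towards `f`, at which the half-circle of radius `ε` about `x`
in direction `e` meets `closure E`; they parametrise the contributors of `x` once `-e` is an
outward direction. -/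
def contribAngles (E : Set Plane) (ε : ℝ) (x e f : Plane) : Set ℝ :=
  {θ ∈ Icc (-(π / 2)) (π / 2) | x + ε • polar e f θ ∈ closure E}

variable {E : Set Plane} {ε : ℝ} {x e f : Plane}

lemma isCompact_contribAngles : IsCompact (contribAngles E ε x e f) :=
  isCompact_Icc.inter_right (isClosed_closure.preimage (by fun_prop))

lemma neg_mem_contribAngles_iff {θ : ℝ} :
    -θ ∈ contribAngles E ε x e (-f) ↔ θ ∈ contribAngles E ε x e f := by
  simp only [contribAngles, mem_ofPred_eq, polar_neg_right, neg_neg, mem_Icc, neg_le_neg_iff,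
    neg_le (a := θ), and_comm (a := θ ≤ π / 2)]

lemma contributors_eq_image_contribAngles (hε : 0 < ε) (hx : x ∈ frontier (eNbhd E ε))
    (h : IsFrame e f) (hout : -e ∈ outwardDirs E ε x) :
    contributors E ε x = (fun θ ↦ x + ε • polar e f θ) '' contribAngles E ε x e f := by
  ext y
  constructor
  · intro hy
    have hyE := frontier_subset_closure hy.1
    have hside := inner_nonpos_of_mem_outwardDirs hε hx hout hy
    rw [inner_neg_right, neg_nonpos] at hside
    obtain ⟨θ, hθ, hyθ⟩ := h.exists_eq_polar (norm_inv_smul_sub hε hy)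
      (by rw [real_inner_smul_left]; exact mul_nonneg (inv_nonneg.2 hε.le) hside)
    have hy_eq : x + ε • polar e f θ = y := by
      rw [← hyθ, smul_inv_smul₀ hε.ne', add_sub_cancel]
    exact ⟨θ, ⟨hθ, hy_eq ▸ hyE⟩, hy_eq⟩
  · rintro ⟨θ, hθ, rfl⟩
    refine (mem_contributors_iff hε hx).2 ⟨hθ.2, ?_⟩
    rw [dist_comm, h.dist_add_smul_polar hε.le]

lemma inner_polar_nonpos_of_mem_outwardDirs (hε : 0 < ε)
    (hx : x ∈ frontier (eNbhd E ε)) (h : IsFrame e f) (hout : -e ∈ outwardDirs E ε x)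
    {ζ : Plane} (hζ : ζ ∈ outwardDirs E ε x) {θ : ℝ} (hθ : θ ∈ contribAngles E ε x e f) :
    ⟪polar e f θ, ζ⟫ ≤ 0 := by
  have hmem : x + ε • polar e f θ ∈ contributors E ε x := by
    rw [contributors_eq_image_contribAngles hε hx h hout]
    exact mem_image_of_mem _ hθ
  have := inner_nonpos_of_mem_outwardDirs hε hx hζ hmem
  rw [add_sub_cancel_left, real_inner_smul_left] at this
  exact nonpos_of_mul_nonpos_right this hε

lemma polar_add_pi_div_two_mem_outwardDirs (hε : 0 < ε)
    (hx : x ∈ frontier (eNbhd E ε)) (h : IsFrame e f) (hout : -e ∈ outwardDirs E ε x)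
    {a b : ℝ} (ha : IsLeast (contribAngles E ε x e f) a)
    (hb : IsGreatest (contribAngles E ε x e f) b) (hgap : b - a < π) :
    polar e f (b + π / 2) ∈ outwardDirs E ε x := by
  have hlim : Tendsto (fun t ↦ polar e f (b + π / 2 + t)) (𝓝[>] 0) (𝓝 (polar e f (b + π / 2))) := by
    have hcont : ContinuousAt (fun t ↦ polar e f (b + π / 2 + t)) 0 := by fun_prop
    simpa [ContinuousAt] using hcont.mono_left nhdsWithin_le_nhds
  refine isClosed_outwardDirs.mem_of_tendsto hlim ?_
  filter_upwards [Ioo_mem_nhdsGT (sub_pos.2 hgap)] with t ht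
  refine mem_outwardDirs_of_inner_neg hε hx (h.norm_polar _) fun y hy ↦ ?_
  rw [contributors_eq_image_contribAngles hε hx h hout] at hy
  obtain ⟨θ, hθ, rfl⟩ := hy
  rw [add_sub_cancel_left, real_inner_smul_left, h.inner_polar_polar,
    show θ - (b + π / 2 + t) = θ - b - t - π / 2 by ring, cos_sub_pi_div_two]
  exact mul_neg_of_pos_of_neg hε (sin_neg_of_neg_of_neg_pi_lt (by linarith [hb.2 hθ, ht.1])
    (by linarith [ha.2 hθ, ht.2]))

lemma mem_extContrib_of_isGreatest (hε : 0 < ε)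
    (hx : x ∈ frontier (eNbhd E ε)) (h : IsFrame e f) (hout : -e ∈ outwardDirs E ε x)
    {a b : ℝ} (ha : IsLeast (contribAngles E ε x e f) a)
    (hb : IsGreatest (contribAngles E ε x e f) b) :
    x + ε • polar e f b ∈ extContrib E ε x := by
  refine ⟨?_, ?_⟩
  · rw [contributors_eq_image_contribAngles hε hx h hout]
    exact mem_image_of_mem _ hb.1
  simp only [add_sub_cancel_left, real_inner_smul_left]
  rcases lt_or_ge (b - a) π with hgap | hgap
  · exact ⟨_, polar_add_pi_div_two_mem_outwardDirs hε hx h hout ha hb hgap,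
      by rw [(h.polar_polar b).inner_eq_zero, mul_zero]⟩
  · have hb' : b = π / 2 := le_antisymm hb.1.1.2 (by linarith [ha.1.1.1])
    exact ⟨-e, hout, by rw [inner_neg_right, h.inner_polar_left, hb', cos_pi_div_two]; simp⟩

lemma mem_extContrib_of_isLeast (hε : 0 < ε)
    (hx : x ∈ frontier (eNbhd E ε)) (h : IsFrame e f) (hout : -e ∈ outwardDirs E ε x)
    {a b : ℝ} (ha : IsLeast (contribAngles E ε x e f) a)
    (hb : IsGreatest (contribAngles E ε x e f) b) :
    x + ε • polar e f a ∈ extContrib E ε x := by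
  have hrefl : ∀ θ ∈ contribAngles E ε x e (-f), -θ ∈ contribAngles E ε x e f := fun θ hθ ↦
    neg_mem_contribAngles_iff.1 (by rwa [neg_neg])
  simpa [polar_neg_right] using mem_extContrib_of_isGreatest hε hx h.neg_right hout
    ⟨neg_mem_contribAngles_iff.2 hb.1, fun θ hθ ↦ neg_le.1 (hb.2 (hrefl θ hθ))⟩
    ⟨neg_mem_contribAngles_iff.2 ha.1, fun θ hθ ↦ le_neg.1 (ha.2 (hrefl θ hθ))⟩

-- An outward direction perpendicular to a contributor has all contributors on one side of the
-- line through `x` and that contributor.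
lemma eq_or_eq_of_inner_polar_eq_zero (hε : 0 < ε)
    (hx : x ∈ frontier (eNbhd E ε)) (h : IsFrame e f) (hout : -e ∈ outwardDirs E ε x)
    {a b θ : ℝ} (ha : IsLeast (contribAngles E ε x e f) a)
    (hb : IsGreatest (contribAngles E ε x e f) b) (hθ : θ ∈ contribAngles E ε x e f)
    {ζ : Plane} (hζ : ζ ∈ outwardDirs E ε x) (hperp : ⟪polar e f θ, ζ⟫ = 0) :
    θ = a ∨ θ = b := by
  have hside : ∀ φ ∈ contribAngles E ε x e f, ⟪polar e f φ, ζ⟫ ≤ 0 := fun φ hφ ↦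
    inner_polar_nonpos_of_mem_outwardDirs hε hx h hout hζ hφ
  have hinner : ∀ φ, ⟪polar e f φ, polar e f (θ + π / 2)⟫ = sin (φ - θ) := fun φ ↦ by
    rw [h.inner_polar_polar, ← sub_sub, cos_sub_pi_div_two]
  have haθ := ha.2 hθ
  have hθb := hb.2 hθ
  rcases (h.polar_polar θ).eq_or_eq_neg hζ.1 (by rwa [real_inner_comm]) with rfl | rfl
  · have hsin := hside b hb.1
    rw [hinner] at hsin
    by_contra! hne
    have hgap : π ≤ b - θ := le_of_not_gt fun hlt ↦
      hsin.not_gt (sin_pos_of_pos_of_lt_pi (sub_pos.2 (hθb.lt_of_ne hne.2)) hlt)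
    exact hne.1 (le_antisymm (by linarith [ha.1.1.1, hb.1.1.2]) haθ)
  · have hsin := hside a ha.1
    rw [inner_neg_right, hinner, ← sin_neg, neg_sub] at hsin
    by_contra! hne
    have hgap : π ≤ θ - a := le_of_not_gt fun hlt ↦
      hsin.not_gt (sin_pos_of_pos_of_lt_pi (sub_pos.2 (haθ.lt_of_ne' hne.1)) hlt)
    exact hne.2 (le_antisymm hθb (by linarith [ha.1.1.1, hb.1.1.2]))

lemma exists_extContrib_eq_pair (hε : 0 < ε) (hx : x ∈ frontier (eNbhd E ε)) :
    ∃ y₁ ∈ contributors E ε x, ∃ y₂ ∈ contributors E ε x,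
    extContrib E ε x = {y₁, y₂} ∧ ∀ y ∈ contributors E ε x, ∀ y' ∈ contributors E ε x,
      ⟪y₁ - x, y₂ - x⟫ ≤ ⟪y - x, y' - x⟫ := by
  obtain ⟨ξ, hξ⟩ := outwardDirs_nonempty hx
  obtain ⟨f, h⟩ := exists_isFrame (e := -ξ) (by rw [norm_neg, hξ.1])
  have hout : - -ξ ∈ outwardDirs E ε x := by rwa [neg_neg]
  have himage := contributors_eq_image_contribAngles hε hx h hout
  have hne : (contribAngles E ε x (-ξ) f).Nonempty :=
    (himage ▸ contributors_nonempty hε hx).of_image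
  obtain ⟨a, ha⟩ := isCompact_contribAngles.exists_isLeast hne
  obtain ⟨b, hb⟩ := isCompact_contribAngles.exists_isGreatest hne
  refine ⟨_, himage ▸ mem_image_of_mem _ ha.1, _, himage ▸ mem_image_of_mem _ hb.1,
    Subset.antisymm ?_ (pair_subset (mem_extContrib_of_isLeast hε hx h hout ha hb)
      (mem_extContrib_of_isGreatest hε hx h hout ha hb)), ?_⟩
  · rintro _ ⟨hy, ζ, hζ, hperp⟩
    rw [himage] at hy
    obtain ⟨θ, hθ, rfl⟩ := hy
    rw [add_sub_cancel_left, real_inner_smul_left, mul_eq_zero_iff_left hε.ne'] at hperp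
    refine (eq_or_eq_of_inner_polar_eq_zero hε hx h hout ha hb hθ hζ hperp).imp ?_ ?_ <;>
      (rintro rfl; rfl)
  · rw [himage]
    rintro _ ⟨θ, hθ, rfl⟩ _ ⟨θ', hθ', rfl⟩
    simp only [add_sub_cancel_left, real_inner_smul_left, real_inner_smul_right,
      h.inner_polar_polar]
    gcongr ε * (ε * ?_)
    rw [← cos_neg (a - b), neg_sub, ← cos_abs (θ - θ')]
    exact cos_le_cos_of_nonneg_of_le_pi (abs_nonneg _) (by linarith [ha.1.1.1, hb.1.1.2])
      (abs_sub_le_of_le_of_le (ha.2 hθ) (hb.2 hθ) (ha.2 hθ') (hb.2 hθ'))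

end ExtremalContributors

section Antipodal

/-- `x ∈ ∂E_ε` has the antipodal contributors `x ± ε p`, with `p` a unit vector. Chain
singularities are limits of points that are nearly of this kind, hence are of this kind. -/
structure IsAntipodal (E : Set Plane) (ε : ℝ) (x p : Plane) : Prop where
  mem_frontier : x ∈ frontier (eNbhd E ε)
  norm_eq_one : ‖p‖ = 1
  add_mem_closure : x + ε • p ∈ closure E
  sub_mem_closure : x - ε • p ∈ closure E

variable {E : Set Plane} {ε : ℝ} {x p p' ξ z : Plane}

lemma isClosed_setOf_isAntipodal : IsClosed {w : Plane × Plane | IsAntipodal E ε w.1 w.2} := by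
  have heq : {w : Plane × Plane | IsAntipodal E ε w.1 w.2} =
      Prod.fst ⁻¹' frontier (eNbhd E ε) ∩ {w | ‖w.2‖ = 1} ∩
        (fun w ↦ w.1 + ε • w.2) ⁻¹' closure E ∩ (fun w ↦ w.1 - ε • w.2) ⁻¹' closure E :=
    Set.ext fun w ↦ ⟨fun h ↦ ⟨⟨⟨h.1, h.2⟩, h.3⟩, h.4⟩, fun h ↦ ⟨h.1.1.1, h.1.1.2, h.1.2, h.2⟩⟩
  rw [heq]
  exact (((isClosed_frontier.preimage continuous_fst).inter
    (isClosed_eq (by fun_prop) continuous_const)).inter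
    (isClosed_closure.preimage (by fun_prop))).inter (isClosed_closure.preimage (by fun_prop))

lemma isSingularity_of_ne {y y' : Plane} (hx : x ∈ frontier (eNbhd E ε))
    (hy : y ∈ contributors E ε x) (hy' : y' ∈ contributors E ε x) (hne : y ≠ y') :
    IsSingularity E ε x := by
  refine ⟨hx, fun ⟨⟨_, w, hw⟩, _⟩ ↦ hne ?_⟩
  rw [hw, mem_singleton_iff] at hy hy'
  rw [hy, hy']

namespace IsAntipodal

lemma neg (h : IsAntipodal E ε x p) : IsAntipodal E ε x (-p) :=
  ⟨h.mem_frontier, by rw [norm_neg, h.norm_eq_one], by simpa [← sub_eq_add_neg] using h.4,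
    by simpa using h.3⟩

lemma add_mem_contributors (hε : 0 < ε) (h : IsAntipodal E ε x p) :
    x + ε • p ∈ contributors E ε x :=
  (mem_contributors_iff hε h.mem_frontier).2 ⟨h.add_mem_closure, by
    rw [dist_self_add_right, norm_smul, h.norm_eq_one, mul_one, Real.norm_of_nonneg hε.le]⟩

lemma sub_mem_contributors (hε : 0 < ε) (h : IsAntipodal E ε x p) :
    x - ε • p ∈ contributors E ε x := by
  simpa [← sub_eq_add_neg] using h.neg.add_mem_contributors hε

lemma isFrame (hε : 0 < ε) (h : IsAntipodal E ε x p) (hξ : ξ ∈ outwardDirs E ε x) :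
    IsFrame ξ p := by
  have hadd := inner_nonpos_of_mem_outwardDirs hε h.mem_frontier hξ (h.add_mem_contributors hε)
  have hsub := inner_nonpos_of_mem_outwardDirs hε h.mem_frontier hξ (h.sub_mem_contributors hε)
  rw [add_sub_cancel_left, real_inner_smul_left] at hadd
  rw [sub_sub_cancel_left, inner_neg_left, real_inner_smul_left] at hsub
  refine ⟨hξ.1, h.norm_eq_one, ?_⟩
  rw [real_inner_comm]
  nlinarith

lemma extOutward_eq (hε : 0 < ε) (h : IsAntipodal E ε x p) :
    extOutward E ε x = outwardDirs E ε x := by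
  refine sep_eq_self_iff_mem_true.2 fun ξ hξ ↦ ⟨_, h.add_mem_contributors hε, ?_⟩
  rw [add_sub_cancel_left, real_inner_smul_left, (h.isFrame hε hξ).symm.inner_eq_zero, mul_zero]

lemma outwardDirs_subset_pair (hε : 0 < ε) (h : IsAntipodal E ε x p) (hξ : ξ ∈ outwardDirs E ε x) :
    outwardDirs E ε x ⊆ {ξ, -ξ} := fun _ hζ ↦
  (h.isFrame hε hξ).symm.eq_or_eq_neg hζ.1 (h.isFrame hε hζ).inner_eq_zero

lemma extContrib_eq (hε : 0 < ε) (h : IsAntipodal E ε x p) :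
    extContrib E ε x = {x + ε • p, x - ε • p} := by
  obtain ⟨ξ, hξ⟩ := outwardDirs_nonempty h.mem_frontier
  have hperp := (h.isFrame hε hξ).symm.inner_eq_zero
  refine Subset.antisymm ?_ (pair_subset ⟨h.add_mem_contributors hε, ξ, hξ, ?_⟩
    ⟨h.sub_mem_contributors hε, ξ, hξ, ?_⟩)
  · rintro y ⟨hy, ζ, hζ, hyζ⟩
    have hy_eq : y = x + ε • ε⁻¹ • (y - x) := by rw [smul_inv_smul₀ hε.ne', add_sub_cancel]
    rcases (h.isFrame hε hζ).eq_or_eq_neg (norm_inv_smul_sub hε hy)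
      (by rw [real_inner_smul_left, hyζ, mul_zero]) with hp | hp
    · left; rw [hy_eq, hp]
    · right; rw [mem_singleton_iff, hy_eq, hp, smul_neg, ← sub_eq_add_neg]
  · rw [add_sub_cancel_left, real_inner_smul_left, hperp, mul_zero]
  · rw [sub_sub_cancel_left, inner_neg_left, real_inner_smul_left, hperp, mul_zero, neg_zero]

lemma isSingularity (hε : 0 < ε) (h : IsAntipodal E ε x p) : IsSingularity E ε x := by
  refine isSingularity_of_ne h.mem_frontier (h.add_mem_contributors hε)
    (h.sub_mem_contributors hε) fun heq ↦ ?_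
  have hzero : (2 * ε) • p = 0 := by rw [← sub_eq_zero.2 heq]; module
  have hp : p = 0 := (smul_eq_zero.1 hzero).resolve_left (by positivity)
  simpa [hp] using h.norm_eq_one

lemma two_mul_abs_inner_le (hε : 0 < ε) (h : IsAntipodal E ε x p) (hz : z ∈ closure (eNbhd E ε)ᶜ) :
    2 * ε * |⟪z - x, p⟫| ≤ ‖z - x‖ ^ 2 := by
  refine two_mul_abs_inner_le_norm_sq h.norm_eq_one hε.le ?_ ?_
  · rw [sub_sub, ← dist_eq_norm]
    exact le_dist_of_mem_closure_compl hε hz h.add_mem_closure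
  · rw [show z - x + ε • p = z - (x - ε • p) by abel, ← dist_eq_norm]
    exact le_dist_of_mem_closure_compl hε hz h.sub_mem_closure

lemma eq_or_eq_neg (hε : 0 < ε) (h : IsAntipodal E ε x p) (h' : IsAntipodal E ε x p') :
    p' = p ∨ p' = -p := by
  obtain ⟨ξ, hξ⟩ := outwardDirs_nonempty h.mem_frontier
  exact (h.isFrame hε hξ).eq_or_eq_neg h'.norm_eq_one (h'.isFrame hε hξ).symm.inner_eq_zero

lemma eventually_lt_abs_inner (hε : 0 < ε) (h : IsAntipodal E ε x p) {c : ℝ} (hc : c < 1) :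
    ∀ᶠ s in 𝓝 x, ∀ p', IsAntipodal E ε s p' → c < |⟪p', p⟫| := by
  have hsphere : ∀ᶠ s in 𝓝 x, ∀ p' ∈ sphere (0 : Plane) 1,
      IsAntipodal E ε s p' → c < |⟪p', p⟫| := by
    refine (isCompact_sphere _ _).eventually_forall_of_forall_eventually fun q _ ↦ ?_
    by_cases hq : IsAntipodal E ε x q
    · have hcq : c < |⟪q, p⟫| := by
        rcases h.eq_or_eq_neg hε hq with rfl | rfl <;>
          simpa [real_inner_self_eq_norm_sq, h.norm_eq_one] using hc
      have hcont : ContinuousAt (fun w : Plane × Plane ↦ |⟪w.2, p⟫|) (x, q) := by fun_prop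
      exact (hcont.eventually_const_lt hcq).mono fun _ hw _ ↦ hw
    · have hopen := (isClosed_setOf_isAntipodal (E := E) (ε := ε)).isOpen_compl
      exact (hopen.eventually_mem (x := (x, q)) hq).mono fun _ hw hw' ↦ absurd hw' hw
  exact hsphere.mono fun s hs p' hp' ↦ hs p' (by simpa using hp'.norm_eq_one) hp'

end IsAntipodal

end Antipodal

section ChainSequences

variable {E : Set Plane} {ε : ℝ} {x : Plane} {u : ℕ → Plane}

lemma isChainSeq_of_isAntipodal (hε : 0 < ε) (hu : ∀ n, ∃ p, IsAntipodal E ε (u n) p)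
    (hne : ∀ n, u n ≠ x) (hux : Tendsto u atTop (𝓝 x)) : IsChainSeq E ε x u := by
  choose p hp using hu
  refine ⟨fun n ↦ (hp n).isSingularity hε, hne, hux, _, _, fun n ↦ (hp n).extContrib_eq hε, ?_⟩
  refine tendsto_const_nhds.congr fun n ↦ ?_
  rw [add_sub_cancel_left, sub_sub_cancel_left, smul_neg, inv_smul_smul₀ hε.ne', inner_neg_right,
    real_inner_self_eq_norm_sq, (hp n).norm_eq_one, one_pow]

lemma tendsto_neg_of_tendsto_inner {F : Type*} [NormedAddCommGroup F] [InnerProductSpace ℝ F]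
    {ι : Type*} {l : Filter ι} {v w : ι → F} {p : F} (hv : ∀ i, ‖v i‖ = 1) (hw : ∀ i, ‖w i‖ = 1)
    (hlim : Tendsto v l (𝓝 p)) (hinner : Tendsto (fun i ↦ ⟪v i, w i⟫) l (𝓝 (-1))) :
    Tendsto w l (𝓝 (-p)) := by
  have hnorm : Tendsto (fun i ↦ ‖v i + w i‖ ^ 2) l (𝓝 0) := by
    have : Tendsto (fun i ↦ 2 + 2 * ⟪v i, w i⟫) l (𝓝 (2 + 2 * -1)) :=
      tendsto_const_nhds.add (tendsto_const_nhds.mul hinner)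
    convert this using 2 with i
    · rw [norm_add_sq_real, hv, hw]; ring
    · norm_num
  have hsum : Tendsto (fun i ↦ v i + w i) l (𝓝 0) := tendsto_zero_iff_norm_tendsto_zero.2
    (by simpa using hnorm.sqrt)
  simpa using hsum.sub hlim

lemma exists_isAntipodal_of_isChainSeq (hε : 0 < ε) (hu : IsChainSeq E ε x u) :
    ∃ p, IsAntipodal E ε x p := by
  obtain ⟨hsing, -, hux, y₁, y₂, hext, hinner⟩ := hu
  have hcontrib : ∀ n, y₁ n ∈ contributors E ε (u n) ∧ y₂ n ∈ contributors E ε (u n) := fun n ↦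
    have hsub : {y₁ n, y₂ n} ⊆ contributors E ε (u n) := hext n ▸ sep_subset _ _
    pair_subset_iff.1 hsub
  obtain ⟨p, hp, φ, hφ, hlim₁⟩ := (isCompact_sphere (0 : Plane) 1).tendsto_subseq
    (fun n ↦ by simpa using norm_inv_smul_sub hε (hcontrib n).1 : ∀ n, ε⁻¹ • (y₁ n - u n) ∈ _)
  have hlim₂ := tendsto_neg_of_tendsto_inner (fun n ↦ norm_inv_smul_sub hε (hcontrib (φ n)).1)
    (fun n ↦ norm_inv_smul_sub hε (hcontrib (φ n)).2) hlim₁ (hinner.comp hφ.tendsto_atTop)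
  have hmem : ∀ (q : Plane) (y : ℕ → Plane), (∀ n, y n ∈ contributors E ε (u n)) →
      Tendsto (fun n ↦ ε⁻¹ • (y (φ n) - u (φ n))) atTop (𝓝 q) → x + ε • q ∈ closure E :=
    fun q y hy hq ↦ isClosed_closure.mem_of_tendsto
      ((hux.comp hφ.tendsto_atTop).add (hq.const_smul ε)) (Eventually.of_forall fun n ↦ by
        simpa [smul_inv_smul₀ hε.ne'] using frontier_subset_closure (hy (φ n)).1)
  exact ⟨p, isClosed_frontier.mem_of_tendsto hux (Eventually.of_forall fun n ↦ (hsing n).1),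
    by simpa using hp, hmem p y₁ (fun n ↦ (hcontrib n).1) hlim₁,
    by simpa [← sub_eq_add_neg] using hmem (-p) y₂ (fun n ↦ (hcontrib n).2) hlim₂⟩

end ChainSequences

section TotallyDisconnected

variable {E : Set Plane} {ε r : ℝ} {x p ξ : Plane} {S : Set Plane}

lemma IsAntipodal.eq_of_inner_eq_zero (hε : 0 < ε) {s p' q : Plane} (hs : IsAntipodal E ε s p')
    (h : IsFrame ξ p) (hp' : 1 / 2 < |⟪p', p⟫|) (hq : q ∈ closure (eNbhd E ε)ᶜ)
    (hqs : dist q s < ε) (hinner : ⟪q - s, ξ⟫ = 0) : q = s := by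
  have hnorm : ‖q - s‖ ^ 2 = ⟪q - s, p⟫ ^ 2 := by rw [h.norm_sq_eq, hinner]; ring
  have hline : q - s = ⟪q - s, p⟫ • p := by
    refine h.ext ?_ ?_ <;> simp [hinner, real_inner_smul_left, h.symm.inner_eq_zero, h.norm_right]
  have hinner' : ⟪q - s, p'⟫ = ⟪q - s, p⟫ * ⟪p', p⟫ := by
    nth_rw 1 [hline]; rw [real_inner_smul_left, real_inner_comm p' p]
  have habs : |⟪q - s, p⟫| = dist q s := by
    rw [dist_eq_norm, ← abs_norm, ← sq_eq_sq_iff_abs_eq_abs, hnorm]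
  have hcone := hs.two_mul_abs_inner_le hε hq
  rw [hinner', abs_mul, habs, ← dist_eq_norm] at hcone
  have hzero : dist q s = 0 := by
    by_contra hne
    have := dist_nonneg.lt_of_ne' hne
    nlinarith [mul_pos hε this]
  exact dist_eq_zero.1 hzero

-- Near a point of `S` lies some `q ∉ E_ε`; were its `ξ`-coordinate shared by some `s ∈ S`, then
-- `q - s` would be parallel to `p`, against the cone bound at `s`.
lemma exists_forall_inner_ne (hε : 0 < ε) (hr : 2 * r ≤ ε) (h : IsFrame ξ p)
    (hS : ∀ s ∈ S, s ∈ ball x r ∧ ∃ p', IsAntipodal E ε s p' ∧ 1 / 2 < |⟪p', p⟫|)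
    {l : ℝ} (hl : 0 < l) : ∃ c ∈ Ioo 0 l, ∀ s ∈ S, ⟪s - x, ξ⟫ ≠ c := by
  by_contra! hall
  obtain ⟨s₀, hs₀, hs₀l⟩ := hall (l / 2) ⟨by positivity, by linarith⟩
  obtain ⟨hs₀x, p₀, hp₀, -⟩ := hS s₀ hs₀
  have hopen : IsOpen (ball x r ∩ {q | ⟪q - x, ξ⟫ ∈ Ioo 0 l}) :=
    isOpen_ball.inter (isOpen_Ioo.preimage (by fun_prop))
  have hs₀mem : s₀ ∈ ball x r ∩ {q | ⟪q - x, ξ⟫ ∈ Ioo 0 l} :=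
    ⟨hs₀x, by rw [mem_ofPred_eq, hs₀l]; exact ⟨by positivity, by linarith⟩⟩
  obtain ⟨q, ⟨hqx, hqξ⟩, hqE⟩ := mem_closure_iff.1
    (mem_frontier_eNbhd_iff.1 hp₀.mem_frontier).2 _ hopen hs₀mem
  obtain ⟨s, hs, hsq⟩ := hall _ hqξ
  obtain ⟨hsx, p', hp', hpp'⟩ := hS s hs
  have hdist : dist q s < ε := by
    linarith [dist_triangle_right q s x, mem_ball.1 hqx, mem_ball.1 hsx]
  have hqs : q = s := hp'.eq_of_inner_eq_zero hε h hpp' (subset_closure hqE) hdist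
    (by rw [← sub_sub_sub_cancel_right q s x, inner_sub_left, hsq, sub_self])
  exact hqE (hqs ▸ (mem_frontier_eNbhd_iff.1 hp'.mem_frontier).1)

-- `S` must leave a box around `x`, and the cone bound keeps it off the sides `± p`.
lemma IsAntipodal.exists_inner_eq_or_eq_neg (hε : 0 < ε) (hrε : r ≤ ε) (hx : IsAntipodal E ε x p)
    (h : IsFrame ξ p) (hS : IsPreconnected S) (hSE : S ⊆ frontier (eNbhd E ε)) (hxS : x ∈ S)
    (hSr : ¬ S ⊆ ball x r) {c₁ c₂ : ℝ} (hc₁ : c₁ ∈ Ioo 0 (r / 2)) (hc₂ : c₂ ∈ Ioo 0 (r / 2)) :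
    ∃ s ∈ S ∩ ball x r, ⟪s - x, ξ⟫ = c₁ ∨ ⟪s - x, ξ⟫ = -c₂ := by
  have hr : 0 < r := by linarith [hc₁.1, hc₁.2]
  let box : Set Plane := ball x r ∩ {z | ⟪z - x, ξ⟫ ∈ Ioo (-c₂) c₁}
  have hopen : IsOpen box := isOpen_ball.inter (isOpen_Ioo.preimage (by fun_prop))
  have hclosed : IsClosed (closedBall x r ∩ {z | ⟪z - x, ξ⟫ ∈ Icc (-c₂) c₁}) :=
    isClosed_closedBall.inter (isClosed_Icc.preimage (by fun_prop))
  have hxbox : x ∈ box := ⟨mem_ball_self hr, by simp [hc₁.1, hc₂.1]⟩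
  have hleave : ¬ closure box ∩ S ⊆ box := fun hsub ↦
    hSr ((hS.subset_of_closure_inter_subset hopen ⟨x, hxS, hxbox⟩ hsub).trans inter_subset_left)
  obtain ⟨s, ⟨hsbox, hsS⟩, hsnot⟩ := not_subset.1 hleave
  obtain ⟨hsr, hsξ⟩ := closure_minimal (t := closedBall x r ∩ {z | ⟪z - x, ξ⟫ ∈ Icc (-c₂) c₁})
    (inter_subset_inter ball_subset_closedBall fun _ hz ↦ Ioo_subset_Icc_self hz) hclosed hsbox
  have hsball : s ∈ ball x r := by
    rw [mem_closedBall, dist_eq_norm] at hsr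
    rw [mem_ball, dist_eq_norm]
    have hcone := hx.two_mul_abs_inner_le hε (mem_frontier_eNbhd_iff.1 (hSE hsS)).2
    have hp : |⟪s - x, p⟫| ≤ r / 2 := by nlinarith [norm_nonneg (s - x), abs_nonneg ⟪s - x, p⟫]
    have hξ : |⟪s - x, ξ⟫| < r / 2 :=
      abs_lt.2 ⟨by linarith [hsξ.1, hc₂.2], by linarith [hsξ.2, hc₁.2]⟩
    refine lt_of_pow_lt_pow_left₀ 2 hr.le ?_
    rw [h.norm_sq_eq, ← sq_abs ⟪s - x, ξ⟫, ← sq_abs ⟪s - x, p⟫]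
    nlinarith [abs_nonneg ⟪s - x, ξ⟫, abs_nonneg ⟪s - x, p⟫]
  refine ⟨s, ⟨hsS, hsball⟩, ?_⟩
  by_contra! hne
  exact hsnot ⟨hsball, hsξ.1.lt_of_ne hne.2.symm, hsξ.2.lt_of_ne hne.1⟩

lemma subsingleton_of_isPreconnected (hε : 0 < ε) (hS : IsPreconnected S)
    (hanti : ∀ s ∈ S, ∃ p, IsAntipodal E ε s p) : S.Subsingleton := by
  intro x hx w hw
  by_contra hxw
  obtain ⟨p, hp⟩ := hanti x hx
  obtain ⟨ξ, hξ⟩ := outwardDirs_nonempty hp.mem_frontier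
  have h := hp.isFrame hε hξ
  obtain ⟨δ, hδ, hball⟩ := Metric.eventually_nhds_iff_ball.1
    (hp.eventually_lt_abs_inner hε one_half_lt_one)
  obtain ⟨r, hr, hrδ⟩ := exists_between (lt_min (lt_min hδ (half_pos hε)) (dist_pos.2 hxw))
  rw [lt_min_iff, lt_min_iff] at hrδ
  have hnear : ∀ s ∈ S ∩ ball x r,
      s ∈ ball x r ∧ ∃ p', IsAntipodal E ε s p' ∧ 1 / 2 < |⟪p', p⟫| := fun s hs ↦ by
    obtain ⟨p', hp'⟩ := hanti s hs.1
    exact ⟨hs.2, p', hp', hball s (ball_subset_ball hrδ.1.1.le hs.2) p' hp'⟩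
  obtain ⟨c₁, hc₁, hne₁⟩ := exists_forall_inner_ne hε (by linarith) h hnear (half_pos hr)
  obtain ⟨c₂, hc₂, hne₂⟩ := exists_forall_inner_ne hε (by linarith) h.neg_left hnear (half_pos hr)
  obtain ⟨s, hs, hsc | hsc⟩ := hp.exists_inner_eq_or_eq_neg hε (by linarith) h hS
    (fun s hs ↦ (hanti s hs).elim fun _ h ↦ h.mem_frontier) hx
    (fun hsub ↦ (mem_ball'.1 (hsub hw)).not_gt hrδ.2) hc₁ hc₂
  · exact hne₁ s hs hsc
  · exact hne₂ s hs (by rw [inner_neg_right, hsc, neg_neg])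

end TotallyDisconnected

section PolarRegion

/-- The polar coordinates, about `x` and in the frame `(e, f)`, of the points outside `E_ε` that
lie in the sector `|θ| < π / 3` of the ball of radius `δ`. The cone bound at an antipodal point
confines the complement of `E_ε` near `x` to this sector and its opposite. -/
def polarCompl (E : Set Plane) (ε : ℝ) (x e f : Plane) (δ : ℝ) : Set (ℝ × ℝ) :=
  {w ∈ Ioo 0 δ ×ˢ Ioo (-(π / 3)) (π / 3) | x + w.1 • polar e f w.2 ∉ eNbhd E ε}

/-- Every point of `closure E` at distance at most `ε` from some point of `B_δ(x)` is `η`-close to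
`x + ε p` or `x - ε p`. For small `δ` this holds when `x ± ε p` are the only contributors of `x`. -/
def IsLocalized (E : Set Plane) (ε : ℝ) (x p : Plane) (δ η : ℝ) : Prop :=
  ∀ z ∈ ball x δ, ∀ y ∈ closure E, dist z y ≤ ε →
    dist y (x + ε • p) < η ∨ dist y (x - ε • p) < η

variable {E : Set Plane} {ε δ η ρ θ : ℝ} {x p ξ z : Plane}

lemma IsLocalized.neg (h : IsLocalized E ε x p δ η) : IsLocalized E ε x (-p) δ η :=
  fun z hz y hy hzy ↦ by simpa [← sub_eq_add_neg] using (h z hz y hy hzy).symm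

lemma exists_isLocalized (hε : 0 < ε) (hx : x ∈ frontier (eNbhd E ε))
    (hcontrib : contributors E ε x ⊆ {x + ε • p, x - ε • p}) (hη : 0 < η) :
    ∃ δ > 0, IsLocalized E ε x p δ η := by
  refine Metric.eventually_nhds_iff_ball.1 (eventually_forall_mem_of_contributors_subset hε hx
    (U := ball (x + ε • p) η ∪ ball (x - ε • p) η) (isOpen_ball.union isOpen_ball)
    (hcontrib.trans (pair_subset (.inl (mem_ball_self hη)) (.inr (mem_ball_self hη)))))

lemma IsFrame.add_smul_polar_mem_halfBall (h : IsFrame ξ p) (hρ : ρ ∈ Ioo 0 δ)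
    (hθ : θ ∈ Ioo (-(π / 3)) (π / 3)) : x + ρ • polar ξ p θ ∈ halfBall x ξ δ := by
  refine ⟨(h.dist_add_smul_polar hρ.1.le).trans_lt hρ.2, ?_⟩
  rw [add_sub_cancel_left, real_inner_smul_left, h.inner_polar_left]
  exact mul_pos hρ.1 (cos_pos_of_mem_Ioo ⟨by linarith [hθ.1, pi_pos], by linarith [hθ.2, pi_pos]⟩)

lemma IsAntipodal.exists_eq_add_smul_polar (hε : 0 < ε) (hx : IsAntipodal E ε x p)
    (h : IsFrame ξ p) (hz : z ∈ closure (eNbhd E ε)ᶜ) (hzx : z ≠ x) (hzε : dist z x < ε)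
    (hside : 0 ≤ ⟪z - x, ξ⟫) :
    ∃ θ ∈ Ioo (-(π / 3)) (π / 3), z = x + dist z x • polar ξ p θ := by
  have hdist : 0 < dist z x := dist_pos.2 hzx
  obtain ⟨θ, hθ, hzθ⟩ := h.exists_eq_polar (v := (dist z x)⁻¹ • (z - x))
    (by rw [norm_smul, ← dist_eq_norm, norm_inv, Real.norm_of_nonneg hdist.le,
      inv_mul_cancel₀ hdist.ne'])
    (by rw [real_inner_smul_left]; positivity)
  have hz_eq : z - x = dist z x • polar ξ p θ := by rw [← hzθ, smul_inv_smul₀ hdist.ne']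
  refine ⟨θ, ?_, by rw [← hz_eq, add_sub_cancel]⟩
  have hcone := hx.two_mul_abs_inner_le hε hz
  rw [← dist_eq_norm, hz_eq, real_inner_smul_left, h.inner_polar_right, abs_mul,
    abs_of_pos hdist] at hcone
  have hsin : |sin θ| < 1 / 2 := by
    by_contra! hge
    nlinarith [mul_pos hdist hε, mul_le_mul_of_nonneg_left hge (mul_pos hdist hε).le]
  have hlt : ∀ {φ : ℝ}, φ ∈ Icc (-(π / 2)) (π / 2) → sin φ < 1 / 2 → φ < π / 6 := fun hφ hsin ↦
    (strictMonoOn_sin.lt_iff_lt hφ ⟨by linarith [pi_pos], by linarith [pi_pos]⟩).1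
      (by rwa [sin_pi_div_six])
  have hpos := hlt hθ (lt_of_abs_lt hsin)
  have hneg := hlt (neg_mem_Icc_iff.2 (by simpa using hθ))
    (by rw [sin_neg]; exact neg_lt.1 (neg_lt_of_abs_lt hsin))
  exact ⟨by linarith [pi_pos], by linarith [pi_pos]⟩

lemma isOpen_polarCompl : IsOpen (polarCompl E ε x ξ p δ) :=
  (isOpen_Ioo.prod isOpen_Ioo).inter (isClosed_eNbhd.isOpen_compl.preimage (by fun_prop))

lemma IsAntipodal.image_polarCompl (hε : 0 < ε) (hδ : δ ≤ ε) (hx : IsAntipodal E ε x p)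
    (h : IsFrame ξ p) :
    (fun w : ℝ × ℝ ↦ x + w.1 • polar ξ p w.2) '' polarCompl E ε x ξ p δ =
      halfBall x ξ δ ∩ (eNbhd E ε)ᶜ := by
  refine Subset.antisymm ?_ fun z hz ↦ ?_
  · rintro _ ⟨w, hw, rfl⟩
    exact ⟨h.add_smul_polar_mem_halfBall hw.1.1 hw.1.2, hw.2⟩
  · have hzx : z ≠ x := fun h ↦ hz.2 (h ▸ (mem_frontier_eNbhd_iff.1 hx.mem_frontier).1)
    obtain ⟨θ, hθ, hzθ⟩ := hx.exists_eq_add_smul_polar hε h (subset_closure hz.2) hzx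
      ((mem_ball.1 hz.1.1).trans_le hδ) hz.1.2.le
    exact ⟨(dist z x, θ), ⟨⟨⟨dist_pos.2 hzx, hz.1.1⟩, hθ⟩, hzθ ▸ hz.2⟩, hzθ.symm⟩

lemma IsLocalized.isPreconnected_section (hε : 0 < ε) (hη : η ≤ ε / 2)
    (hloc : IsLocalized E ε x p δ η) (h : IsFrame ξ p) (ρ : ℝ) :
    IsPreconnected (Prod.mk ρ ⁻¹' polarCompl E ε x ξ p δ) := by
  refine OrdConnected.isPreconnected ⟨fun θ₁ h₁ θ₂ h₂ θ hθ ↦ ?_⟩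
  have hρ : ρ ∈ Ioo 0 δ := h₁.1.1
  have hθ' : θ ∈ Ioo (-(π / 3)) (π / 3) := ordConnected_Ioo.out h₁.1.2 h₂.1.2 hθ
  refine ⟨⟨hρ, hθ'⟩, fun hmem ↦ ?_⟩
  obtain ⟨y, hy, hle⟩ := (mem_eNbhd_iff hε).1 hmem
  have hball : x + ρ • polar ξ p θ ∈ ball x δ := (h.dist_add_smul_polar hρ.1.le).trans_lt hρ.2
  rcases hloc _ hball y hy hle with hnear | hnear
  · exact ((h.strictAntiOn_dist_polar (hnear.trans_le hη) hρ.1).antitoneOn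
      (Ioo_subset_Icc_self hθ') (Ioo_subset_Icc_self h₂.1.2) hθ.2).not_gt
        (hle.trans_lt (lt_dist_of_notMem_eNbhd hε h₂.2 hy))
  · exact ((h.strictMonoOn_dist_polar (hnear.trans_le hη) hρ.1).monotoneOn
      (Ioo_subset_Icc_self h₁.1.2) (Ioo_subset_Icc_self hθ') hθ.1).not_gt
        (hle.trans_lt (lt_dist_of_notMem_eNbhd hε h₁.2 hy))

lemma IsAntipodal.isPreconnected_halfBall_inter_compl (hε : 0 < ε) (hδ : δ ≤ ε) (hη : η ≤ ε / 2)
    (hx : IsAntipodal E ε x p) (h : IsFrame ξ p) (hloc : IsLocalized E ε x p δ η)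
    (hbase : Ioo 0 δ ⊆ Prod.fst '' polarCompl E ε x ξ p δ) :
    IsPreconnected (halfBall x ξ δ ∩ (eNbhd E ε)ᶜ) := by
  rw [← hx.image_polarCompl hε hδ h]
  refine (isPreconnected_of_isOpen_of_sections isOpen_polarCompl ?_
    (hloc.isPreconnected_section hε hη h)).image _ (by fun_prop)
  have heq : Prod.fst '' polarCompl E ε x ξ p δ = Ioo 0 δ :=
    Subset.antisymm (image_subset_iff.2 fun _ hw ↦ hw.1.1) hbase
  exact heq ▸ isPreconnected_Ioo

lemma exists_mem_closure_of_mem_closure_fst_image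
    (hρ : ρ ∈ closure (Prod.fst '' polarCompl E ε x ξ p δ)) :
    ∃ θ ∈ Icc (-(π / 3)) (π / 3), x + ρ • polar ξ p θ ∈ closure (eNbhd E ε)ᶜ := by
  have hbox : closure (polarCompl E ε x ξ p δ) ⊆ Icc 0 δ ×ˢ Icc (-(π / 3)) (π / 3) :=
    closure_minimal ((sep_subset _ _).trans
      (prod_mono Ioo_subset_Icc_self Ioo_subset_Icc_self)) (isClosed_Icc.prod isClosed_Icc)
  have hcpt : IsCompact (closure (polarCompl E ε x ξ p δ)) :=
    (isCompact_Icc.prod isCompact_Icc).of_isClosed_subset isClosed_closure hbox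
  obtain ⟨⟨_, θ⟩, hw, rfl⟩ := closure_minimal (image_mono subset_closure)
    (hcpt.image continuous_fst).isClosed hρ
  refine ⟨θ, (hbox hw).2, closure_mono (image_subset_iff.2 fun w hw ↦ hw.2) <|
    image_closure_subset_closure_image (f := fun w : ℝ × ℝ ↦ x + w.1 • polar ξ p w.2)
      (by fun_prop) (mem_image_of_mem _ hw)⟩

lemma IsAntipodal.exists_polar_mem_frontier (hε : 0 < ε) (hδ : δ ≤ ε) (hη : η ≤ ε / 2)
    (hx : IsAntipodal E ε x p) (h : IsFrame ξ p) (hloc : IsLocalized E ε x p δ η)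
    (hne : (halfBall x ξ δ ∩ (eNbhd E ε)ᶜ).Nonempty)
    (hconn : ¬ IsConnected (halfBall x ξ δ ∩ (eNbhd E ε)ᶜ)) :
    ∃ ρ ∈ Ioo 0 δ, ∃ θ ∈ Ioo (-(π / 3)) (π / 3), x + ρ • polar ξ p θ ∈ frontier (eNbhd E ε) ∧
      ∀ φ ∈ Ioo (-(π / 3)) (π / 3), x + ρ • polar ξ p φ ∈ eNbhd E ε := by
  have hbase : ¬ Ioo 0 δ ⊆ Prod.fst '' polarCompl E ε x ξ p δ := fun hbase ↦
    hconn ⟨hne, hx.isPreconnected_halfBall_inter_compl hε hδ hη h hloc hbase⟩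
  have hinter : (Ioo 0 δ ∩ Prod.fst '' polarCompl E ε x ξ p δ).Nonempty := by
    rw [← hx.image_polarCompl hε hδ h, image_nonempty] at hne
    obtain ⟨w, hw⟩ := hne
    exact ⟨w.1, hw.1.1, mem_image_of_mem _ hw⟩
  obtain ⟨ρ, ⟨hρcl, hρ⟩, hρnot⟩ : ∃ ρ ∈ closure (Prod.fst '' polarCompl E ε x ξ p δ) ∩ Ioo 0 δ,
      ρ ∉ Prod.fst '' polarCompl E ε x ξ p δ := not_subset.1 fun hsub ↦
    hbase (isPreconnected_Ioo.subset_of_closure_inter_subset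
      (isOpenMap_fst _ isOpen_polarCompl) hinter hsub)
  have harc : ∀ φ ∈ Ioo (-(π / 3)) (π / 3), x + ρ • polar ξ p φ ∈ eNbhd E ε := fun φ hφ ↦
    not_not.1 fun hmem ↦ hρnot ⟨(ρ, φ), ⟨⟨hρ, hφ⟩, hmem⟩, rfl⟩
  obtain ⟨θ, hθ, hcl⟩ := exists_mem_closure_of_mem_closure_fst_image hρcl
  have hdist : dist (x + ρ • polar ξ p θ) x = ρ := h.dist_add_smul_polar hρ.1.le
  have hside : 0 ≤ ⟪x + ρ • polar ξ p θ - x, ξ⟫ := by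
    rw [add_sub_cancel_left, real_inner_smul_left, h.inner_polar_left]
    exact mul_nonneg hρ.1.le
      (cos_nonneg_of_mem_Icc ⟨by linarith [hθ.1, pi_pos], by linarith [hθ.2, pi_pos]⟩)
  obtain ⟨θ', hθ', heq⟩ := hx.exists_eq_add_smul_polar hε h hcl
    (dist_pos.1 (hdist.symm ▸ hρ.1)) (hdist.trans_lt (hρ.2.trans_le hδ)) hside
  rw [hdist] at heq
  exact ⟨ρ, hρ, θ', hθ', mem_frontier_eNbhd_iff.2 ⟨harc θ' hθ', heq ▸ hcl⟩, harc⟩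

lemma IsLocalized.exists_mem_contributors_dist_add_le (hε : 0 < ε) (hη : η ≤ ε / 2)
    (hloc : IsLocalized E ε x p δ η) (h : IsFrame ξ p) (hρ : ρ ∈ Ioo 0 δ)
    (hθ : θ ∈ Ioo (-(π / 3)) (π / 3)) (hu : x + ρ • polar ξ p θ ∈ frontier (eNbhd E ε))
    (harc : ∀ φ ∈ Ioo (-(π / 3)) (π / 3), x + ρ • polar ξ p φ ∈ eNbhd E ε) :
    ∃ y ∈ contributors E ε (x + ρ • polar ξ p θ), dist y (x + ε • p) ≤ η := by
  by_contra! hfar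
  have hcont : ContinuousAt (fun φ ↦ x + ρ • polar ξ p φ) θ := by fun_prop
  have hright : ∀ᶠ φ in 𝓝[>] θ, ∀ y ∈ closure E, dist (x + ρ • polar ξ p φ) y ≤ ε →
      η < dist y (x + ε • p) :=
    (hcont.mono_left nhdsWithin_le_nhds).eventually
      (eventually_forall_mem_of_contributors_subset (U := {y | η < dist y (x + ε • p)}) hε hu
        (isOpen_lt continuous_const (by fun_prop)) hfar)
  obtain ⟨φ, hφ, hθφ, hφ'⟩ := (hright.and (Ioo_mem_nhdsGT hθ.2)).exists
  have hφmem : φ ∈ Ioo (-(π / 3)) (π / 3) := ⟨hθ.1.trans hθφ, hφ'⟩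
  obtain ⟨y, hy, hle⟩ := (mem_eNbhd_iff hε).1 (harc φ hφmem)
  have hball : x + ρ • polar ξ p φ ∈ ball x δ := (h.dist_add_smul_polar hρ.1.le).trans_lt hρ.2
  rcases hloc _ hball y hy hle with hnear | hnear
  · exact hnear.not_gt (hφ y hy hle)
  · exact (le_dist_of_mem_frontier hε hu hy).not_gt <|
      (h.strictMonoOn_dist_polar (hnear.trans_le hη) hρ.1 (Ioo_subset_Icc_self hθ)
        (Ioo_subset_Icc_self hφmem) hθφ).trans_le hle

end PolarRegion

section Dichotomy

variable {E : Set Plane} {ε δ η : ℝ} {x p ξ : Plane}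

lemma halfBall_inter_compl_nonempty (hξ : ξ ∈ outwardDirs E ε x) (hδ : 0 < δ) :
    (halfBall x ξ δ ∩ (eNbhd E ε)ᶜ).Nonempty := by
  obtain ⟨hnorm, hcl⟩ := mem_outwardDirs_iff.1 hξ
  have hopen : IsOpen (ball x δ ×ˢ {v | 0 < ⟪v, ξ⟫}) :=
    isOpen_ball.prod (isOpen_lt continuous_const (by fun_prop))
  obtain ⟨_, ⟨hzx, hzξ⟩, z, hz, rfl⟩ := mem_closure_iff.1 hcl _ hopen
    ⟨mem_ball_self hδ, by rw [mem_ofPred_eq, real_inner_self_eq_norm_sq, hnorm]; positivity⟩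
  rw [mem_ofPred_eq, real_inner_smul_left] at hzξ
  exact ⟨z, ⟨hzx, pos_of_mul_pos_right hzξ (by positivity)⟩, hz⟩

lemma IsAntipodal.contributors_subset_pair (hε : 0 < ε) (hx : IsAntipodal E ε x p)
    (hξ : ξ ∈ outwardDirs E ε x) (hξ' : -ξ ∈ outwardDirs E ε x) :
    contributors E ε x ⊆ {x + ε • p, x - ε • p} := by
  rw [← hx.extContrib_eq hε]
  refine fun y hy ↦ ⟨hy, ξ, hξ, ?_⟩
  have hneg := inner_nonpos_of_mem_outwardDirs hε hx.mem_frontier hξ' hy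
  rw [inner_neg_right, neg_nonpos] at hneg
  exact (inner_nonpos_of_mem_outwardDirs hε hx.mem_frontier hξ hy).antisymm hneg

lemma IsAntipodal.exists_frontier_of_not_isConnected (hε : 0 < ε) (hx : IsAntipodal E ε x p)
    (hξ : ξ ∈ outwardDirs E ε x) (hcontrib : contributors E ε x ⊆ {x + ε • p, x - ε • p})
    (hconn : ∀ δ > 0, ¬ IsConnected (halfBall x ξ δ ∩ (eNbhd E ε)ᶜ))
    (hη : 0 < η) (hηε : η ≤ ε / 2) :
    ∃ u ∈ frontier (eNbhd E ε) ∩ halfBall x ξ η, ∃ y ∈ contributors E ε u,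
      ∃ y' ∈ contributors E ε u, dist y (x + ε • p) ≤ η ∧ dist y' (x - ε • p) ≤ η := by
  have h := hx.isFrame hε hξ
  obtain ⟨δ₀, hδ₀, hloc₀⟩ := exists_isLocalized hε hx.mem_frontier hcontrib hη
  obtain ⟨δ, hδ, hδle⟩ := exists_between (lt_min (lt_min hδ₀ hη) hε)
  rw [lt_min_iff, lt_min_iff] at hδle
  have hloc : IsLocalized E ε x p δ η := fun z hz ↦ hloc₀ z (ball_subset_ball hδle.1.1.le hz)
  obtain ⟨ρ, hρ, θ, hθ, hu, harc⟩ := hx.exists_polar_mem_frontier hε hδle.2.le hηε h hloc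
    (halfBall_inter_compl_nonempty hξ hδ) (hconn δ hδ)
  have hneg : ∀ {φ : ℝ}, φ ∈ Ioo (-(π / 3)) (π / 3) → -φ ∈ Ioo (-(π / 3)) (π / 3) :=
    fun hφ ↦ neg_mem_Ioo_iff.2 (by simpa using hφ)
  obtain ⟨y, hy, hyp⟩ := hloc.exists_mem_contributors_dist_add_le hε hηε h hρ hθ hu harc
  obtain ⟨y', hy', hyp'⟩ := hloc.neg.exists_mem_contributors_dist_add_le hε hηε h.neg_right hρ
    (hneg hθ) (by simpa [polar_neg_right] using hu)
    (fun φ hφ ↦ by rw [polar_neg_right]; exact harc _ (hneg hφ))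
  rw [polar_neg_right, neg_neg] at hy'
  rw [smul_neg, ← sub_eq_add_neg] at hyp'
  exact ⟨_, ⟨hu, h.add_smul_polar_mem_halfBall ⟨hρ.1, hρ.2.trans hδle.1.2⟩ hθ⟩,
    y, hy, y', hy', hyp, hyp'⟩

end Dichotomy

section Types

variable {E : Set Plane} {ε : ℝ} {x p ξ : Plane} {u : ℕ → Plane}

lemma isChainSeq_of_tendsto_contributors (hε : 0 < ε) (hp : ‖p‖ = 1) {y y' : ℕ → Plane}
    (hu : ∀ n, u n ∈ frontier (eNbhd E ε)) (hux : Tendsto u atTop (𝓝 x)) (hne : ∀ n, u n ≠ x)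
    (hy : ∀ n, y n ∈ contributors E ε (u n)) (hy' : ∀ n, y' n ∈ contributors E ε (u n))
    (hyy' : ∀ n, y n ≠ y' n) (hlim : Tendsto y atTop (𝓝 (x + ε • p)))
    (hlim' : Tendsto y' atTop (𝓝 (x - ε • p))) : IsChainSeq E ε x u := by
  choose y₁ hy₁ y₂ hy₂ hext hmin using fun n ↦ exists_extContrib_eq_pair hε (hu n)
  refine ⟨fun n ↦ isSingularity_of_ne (hu n) (hy n) (hy' n) (hyy' n), hne, hux, y₁, y₂, hext, ?_⟩
  have hsmul : Tendsto (fun n ↦ ⟪ε⁻¹ • (y n - u n), ε⁻¹ • (y' n - u n)⟫) atTop (𝓝 (-1)) := by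
    convert ((hlim.sub hux).const_smul ε⁻¹).inner ((hlim'.sub hux).const_smul ε⁻¹) using 2
    rw [add_sub_cancel_left, sub_sub_cancel_left, smul_neg, inv_smul_smul₀ hε.ne',
      inner_neg_right, real_inner_self_eq_norm_sq, hp, one_pow]
  refine tendsto_of_tendsto_of_tendsto_of_le_of_le tendsto_const_nhds hsmul (fun n ↦ ?_)
    fun n ↦ ?_
  · have hle := abs_real_inner_le_norm (ε⁻¹ • (y₁ n - u n)) (ε⁻¹ • (y₂ n - u n))
    rw [norm_inv_smul_sub hε (hy₁ n), norm_inv_smul_sub hε (hy₂ n), mul_one] at hle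
    exact (abs_le.1 hle).1
  · simp only [real_inner_smul_left, real_inner_smul_right]
    gcongr
    exact hmin n _ (hy n) _ (hy' n)

lemma IsAntipodal.exists_isChainSeq_of_not_isConnected (hε : 0 < ε) (hx : IsAntipodal E ε x p)
    (hξ : ξ ∈ outwardDirs E ε x) (hξ' : -ξ ∈ outwardDirs E ε x)
    (hconn : ∀ δ > 0, ¬ IsConnected (halfBall x ξ δ ∩ (eNbhd E ε)ᶜ)) :
    ∃ u, IsChainSeq E ε x u ∧ ∀ n, u n ∈ halfBall x ξ ε := by
  have hcontrib := hx.contributors_subset_pair hε hξ hξ'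
  obtain ⟨η, -, hη, hη₀⟩ := exists_seq_strictAnti_tendsto' (half_pos hε)
  choose u hu y hy y' hy' hyp hyp' using fun n ↦
    hx.exists_frontier_of_not_isConnected hε hξ hcontrib hconn (hη n).1 (hη n).2.le
  have hne : ∀ n, y n ≠ y' n := fun n heq ↦ by
    have htri := dist_triangle_left (x + ε • p) (x - ε • p) (y n)
    have hdist : dist (x + ε • p) (x - ε • p) = 2 * ε := by
      rw [dist_eq_norm, show x + ε • p - (x - ε • p) = (2 * ε) • p by module, norm_smul,
        hx.norm_eq_one, mul_one, Real.norm_of_nonneg (by positivity)]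
    linarith [hyp n, heq ▸ hyp' n, (hη n).2]
  have hux : Tendsto u atTop (𝓝 x) := tendsto_iff_dist_tendsto_zero.2 <|
    squeeze_zero (fun _ ↦ dist_nonneg) (fun n ↦ (mem_ball.1 (hu n).2.1).le) hη₀
  refine ⟨u, isChainSeq_of_tendsto_contributors hε hx.norm_eq_one (fun n ↦ (hu n).1) hux
    (fun n heq ↦ ?_) hy hy' hne ?_ ?_, fun n ↦
      ⟨ball_subset_ball ((hη n).2.le.trans (half_le_self hε.le)) (hu n).2.1, (hu n).2.2⟩⟩
  · simpa [heq] using (hu n).2.2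
  · exact tendsto_iff_dist_tendsto_zero.2 (squeeze_zero (fun _ ↦ dist_nonneg) hyp hη₀)
  · exact tendsto_iff_dist_tendsto_zero.2 (squeeze_zero (fun _ ↦ dist_nonneg) hyp' hη₀)

lemma exists_isChainSeq_mem_halfBall (hu : IsChainSeq E ε x u)
    (hside : ∃ᶠ n in atTop, 0 < ⟪u n - x, ξ⟫) {δ : ℝ} (hδ : 0 < δ) :
    ∃ v, IsChainSeq E ε x v ∧ ∀ n, v n ∈ halfBall x ξ δ := by
  obtain ⟨hsing, hne, hux, y₁, y₂, hext, hinner⟩ := hu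
  obtain ⟨φ, hφ, hφu⟩ := extraction_of_frequently_atTop
    (hside.and_eventually (hux.eventually_mem (ball_mem_nhds x hδ)))
  exact ⟨u ∘ φ, ⟨fun _ ↦ hsing _, fun _ ↦ hne _, hux.comp hφ.tendsto_atTop, y₁ ∘ φ, y₂ ∘ φ,
    fun _ ↦ hext _, hinner.comp hφ.tendsto_atTop⟩, fun n ↦ (hφu n).symm⟩

lemma IsAntipodal.eventually_inner_ne_zero (hε : 0 < ε) (hx : IsAntipodal E ε x p)
    (hξ : ξ ∈ outwardDirs E ε x) (hu : IsChainSeq E ε x u) :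
    ∀ᶠ n in atTop, ⟪u n - x, ξ⟫ ≠ 0 := by
  filter_upwards [hu.2.2.1.eventually_mem (ball_mem_nhds x hε)] with n hn hzero
  obtain ⟨hne, hcone⟩ := And.intro (hu.2.1 n) <|
    hx.two_mul_abs_inner_le hε (mem_frontier_eNbhd_iff.1 (hu.1 n).1).2
  have hnorm : ‖u n - x‖ ^ 2 = ⟪u n - x, p⟫ ^ 2 := by
    rw [(hx.isFrame hε hξ).norm_sq_eq, hzero]; ring
  have habs : |⟪u n - x, p⟫| = ‖u n - x‖ := by
    rw [← abs_norm, ← sq_eq_sq_iff_abs_eq_abs, hnorm]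
  rw [mem_ball, dist_eq_norm] at hn
  rw [habs] at hcone
  nlinarith [norm_sub_pos_iff.2 hne]

lemma IsAntipodal.isChainChain_or_isSharpChain (hε : 0 < ε) (hx : IsAntipodal E ε x p)
    (hξ : ξ ∈ outwardDirs E ε x) (hξ' : -ξ ∈ outwardDirs E ε x) (hu : IsChainSeq E ε x u)
    (hside : ∃ᶠ n in atTop, 0 < ⟪u n - x, ξ⟫) : IsChainChain E ε x ∨ IsSharpChain E ε x := by
  have hout : extOutward E ε x = {ξ, -ξ} := by
    rw [hx.extOutward_eq hε]
    exact (hx.outwardDirs_subset_pair hε hξ).antisymm (pair_subset hξ hξ')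
  have hpos := exists_isChainSeq_mem_halfBall hu hside hε
  by_cases hconn : ∃ δ > 0, IsConnected (halfBall x (-ξ) δ ∩ (eNbhd E ε)ᶜ)
  · exact .inr ⟨hx.isSingularity hε, -ξ, by rw [hout, neg_neg, pair_comm], hconn, ε, hε,
      by rwa [neg_neg]⟩
  · push Not at hconn
    have hneg := hx.exists_isChainSeq_of_not_isConnected hε hξ' (by rwa [neg_neg]) hconn
    exact .inl ⟨hx.isSingularity hε, ξ, hout, by
      rintro η (rfl | rfl)
      exacts [⟨ε, hε, hpos⟩, ⟨ε, hε, hneg⟩]⟩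

lemma chainSing_or_chainChain_or_sharpChain_of_isChainSeq (hε : 0 < ε)
    (hu : IsChainSeq E ε x u) :
    IsChainSing E ε x ∨ IsChainChain E ε x ∨ IsSharpChain E ε x := by
  obtain ⟨p, hx⟩ := exists_isAntipodal_of_isChainSeq hε hu
  obtain ⟨ξ, hξ⟩ := outwardDirs_nonempty hx.mem_frontier
  by_cases hξ' : -ξ ∈ outwardDirs E ε x
  · right
    have hside : ∃ᶠ n in atTop, 0 < ⟪u n - x, ξ⟫ ∨ 0 < ⟪u n - x, -ξ⟫ :=
      ((hx.eventually_inner_ne_zero hε hξ hu).mono fun n hn ↦ by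
        rwa [inner_neg_right, neg_pos, or_comm, ← ne_iff_lt_or_gt]).frequently
    rcases frequently_or_distrib.1 hside with hside | hside
    · exact hx.isChainChain_or_isSharpChain hε hξ hξ' hu hside
    · exact hx.isChainChain_or_isSharpChain hε hξ' (by rwa [neg_neg]) hu hside
  · left
    refine ⟨hx.isSingularity hε, ⟨ξ, ?_⟩, u, hu⟩
    rw [hx.extOutward_eq hε]
    refine (Subset.antisymm (fun ζ hζ ↦ ?_) (singleton_subset_iff.2 hξ))
    exact (hx.outwardDirs_subset_pair hε hξ hζ).resolve_right fun h ↦ hξ' (h ▸ hζ)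

lemma chainSing_or_chainChain_or_sharpChain_iff (hε : 0 < ε) :
    IsChainSing E ε x ∨ IsChainChain E ε x ∨ IsSharpChain E ε x ↔ ∃ u, IsChainSeq E ε x u := by
  refine ⟨?_, fun ⟨u, hu⟩ ↦ chainSing_or_chainChain_or_sharpChain_of_isChainSeq hε hu⟩
  rintro (⟨-, -, hu⟩ | ⟨-, ξ, -, hside⟩ | ⟨-, ξ, -, -, δ, -, u, hu, -⟩)
  · exact hu
  · obtain ⟨δ, -, u, hu, -⟩ := hside ξ (mem_insert _ _)
    exact ⟨u, hu⟩
  · exact ⟨u, hu⟩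

lemma isClosed_setOf_exists_isChainSeq (hε : 0 < ε) :
    IsClosed {x | ∃ u, IsChainSeq E ε x u} := by
  refine IsSeqClosed.isClosed fun v x hv hvx ↦ ?_
  by_cases hmem : ∃ n, v n = x
  · obtain ⟨n, rfl⟩ := hmem
    exact hv n
  · exact ⟨v, isChainSeq_of_isAntipodal hε
      (fun n ↦ (hv n).elim fun _ ↦ exists_isAntipodal_of_isChainSeq hε) (not_exists.1 hmem) hvx⟩

end Types

end ChainSingularities

open ChainSingularities in
theorem chain_singularities_closed_totally_disconnected_general (E : Set Plane) {ε : ℝ}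
    (hε : 0 < ε) :
    IsClosed {x : Plane | IsChainSing E ε x ∨ IsChainChain E ε x ∨ IsSharpChain E ε x} ∧
    IsTotallyDisconnected
      {x : Plane | IsChainSing E ε x ∨ IsChainChain E ε x ∨ IsSharpChain E ε x} := by
  simp only [chainSing_or_chainChain_or_sharpChain_iff hε]
  refine ⟨isClosed_setOf_exists_isChainSeq hε, fun S hS hSconn ↦
    subsingleton_of_isPreconnected hε hSconn fun s hs ↦
      (hS hs).elim fun _ ↦ exists_isAntipodal_of_isChainSeq hε⟩

/-- The set of chain singularities (types S6, S7 and S8) is closed and totally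
disconnected. -/
theorem chain_singularities_closed_totally_disconnected (E : Set Plane)
    (hE : IsCompact E) {ε : ℝ} (hε : 0 < ε) :
    IsClosed {x : Plane | IsChainSing E ε x ∨ IsChainChain E ε x ∨ IsSharpChain E ε x} ∧
    IsTotallyDisconnected
      {x : Plane | IsChainSing E ε x ∨ IsChainChain E ε x ∨ IsSharpChain E ε x} :=
  chain_singularities_closed_totally_disconnected_general E hε

end
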